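/- For any pair (π̃, φ) ∈ E and every continuous bounded function f : Ω_0 × U_d → ℝ, P_0-almost surely in ω and P^{π̃,ω}_0-almost surely, (1/n) Σ_{k=0}^{n−1} f(τ_{X_k}ω, X_{k+1}−X_k) converges as n → ∞ to ∫_{Ω_0} φ(ω) Σ_{e∈U_d} f(ω,e) π̃(ω,e) dP_0(ω). -/

import Mathlib

open MeasureTheory ProbabilityTheory Filter Topology
open scoped ENNReal NNReal BigOperators

noncomputable section

namespace SRWPC

/-- Vertices of the lattice `ℤ^d`. -/
abbrev V (d : ℕ) := Fin d → ℤ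

/-- Index of a nearest-neighbour bond: the bond from `x` to `x + eᵢ`. -/
abbrev EdgeIx (d : ℕ) := V d × Fin d

/-- Percolation configurations `Ω = {0,1}^{𝔹_d}`. -/
abbrev Config (d : ℕ) := EdgeIx d → Bool

/-- The `i`-th coordinate unit vector. -/
def unitVec (d : ℕ) (i : Fin d) : V d := fun j => if j = i then 1 else 0

/-- The set `𝕌_d` of the `2d` unit vectors. -/
def Ud (d : ℕ) : Finset (V d) :=
  (Finset.univ.image (unitVec d)) ∪ (Finset.univ.image (fun i => -unitVec d i))

/-- The type of nearest-neighbour steps (elements of `𝕌_d`). -/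
abbrev Step (d : ℕ) := {e : V d // e ∈ Ud d}

/-- The shift `(τ_x ω)_b = ω_{x+b}`. -/
def shift {d : ℕ} (x : V d) (ω : Config d) : Config d := fun b => ω (b.1 + x, b.2)

/-- The bond from `x` to `x + e` is open in `ω`. -/
def edgeOpen {d : ℕ} (ω : Config d) (x e : V d) : Prop :=
  ∃ i : Fin d, (e = unitVec d i ∧ ω (x, i) = true) ∨
    (e = -unitVec d i ∧ ω (x - unitVec d i, i) = true)

open Classical in
/-- The number of open bonds incident to `x`. -/
def openDeg {d : ℕ} (ω : Config d) (x : V d) : ℕ :=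
  ((Ud d).filter (fun e => edgeOpen ω x e)).card

open Classical in
/-- The transition probability `π_ω(x,e)` of the simple random walk on the cluster. -/
def trans {d : ℕ} (ω : Config d) (x e : V d) : ℝ :=
  if edgeOpen ω x e then 1 / openDeg ω x else 0

/-- `γ` restricted to `{0,…,n}` is a nearest-neighbour open path in `ω`. -/
def IsOpenPath {d : ℕ} (ω : Config d) (γ : ℕ → V d) (n : ℕ) : Prop :=
  ∀ k < n, (γ (k + 1) - γ k) ∈ Ud d ∧ edgeOpen ω (γ k) (γ (k + 1) - γ k)

/-- `x` lies in the box `[-r,r]^d`. -/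
def inBox {d : ℕ} (x : V d) (r : ℝ) : Prop := ∀ i, |(x i : ℝ)| ≤ r

/-- `x` is joined to infinity by a nearest-neighbour open path, i.e. `x ∈ 𝒞_∞(ω)`. -/
def memCluster {d : ℕ} (ω : Config d) (x : V d) : Prop :=
  ∀ R : ℕ, ∃ (γ : ℕ → V d) (n : ℕ), γ 0 = x ∧ IsOpenPath ω γ n ∧ ¬ inBox (γ n) R

/-- The event `Ω_0 = {0 ∈ 𝒞_∞}`. -/
def cluZero (d : ℕ) : Set (Config d) := {ω | memCluster ω 0}

/-- `P` is the Bernoulli bond percolation product measure with parameter `q`. -/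
def IsBernoulli (d : ℕ) (q : ℝ) (P : Measure (Config d)) : Prop :=
  IsProbabilityMeasure P ∧
    ∀ (F : Finset (EdgeIx d)) (a : EdgeIx d → Bool),
      P {ω | ∀ b ∈ F, ω b = a b} = ∏ b ∈ F, ENNReal.ofReal (if a b then q else 1 - q)

/-- The critical probability `p_c(d)` of bond percolation on `ℤ^d`. -/
def pc (d : ℕ) : ℝ :=
  sInf {q : ℝ | q ∈ Set.Icc (0 : ℝ) 1 ∧
    ∀ P : Measure (Config d), IsBernoulli d q P → 0 < P (cluZero d)}

variable {d : ℕ}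

/-- Position of the walk after `k` steps, given the sequence of steps `s`. -/
def pos {n : ℕ} (s : Fin n → Step d) (k : ℕ) : V d :=
  ∑ j ∈ Finset.univ.filter (fun j : Fin n => (j : ℕ) < k), (s j).1

/-- The environment/step pair `(τ_{X_k} ω, X_{k+1} - X_k)` seen at time `k`. -/
def envPair (ω : Config d) {n : ℕ} (s : Fin n → Step d) (k : Fin n) : Config d × Step d :=
  (shift (pos s k) ω, s k)

/-- Quenched probability of a given sequence of `n` steps under the Markov kernel `κ`. -/
def pathProb (κ : Config d → Step d → ℝ) (ω : Config d) {n : ℕ} (s : Fin n → Step d) : ℝ :=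
  ∏ k : Fin n, κ (shift (pos s k) ω) (s k)

/-- The SRWPC transition kernel `π`. -/
def srw (d : ℕ) : Config d → Step d → ℝ := fun ω e => trans ω 0 e.1

/-- Quenched expectation (under `P_0^{κ,ω}`) of a functional of the first `n` steps. -/
def qE (κ : Config d → Step d → ℝ) (ω : Config d) {n : ℕ} (F : (Fin n → Step d) → ℝ) : ℝ :=
  ∑ s : Fin n → Step d, pathProb κ ω s * F s

/-- Quenched probability (under `P_0^{κ,ω}`) of a set of `n`-step trajectories. -/
def qP (κ : Config d → Step d → ℝ) (ω : Config d) {n : ℕ} (A : Set (Fin n → Step d)) : ℝ :=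
  ∑ s : Fin n → Step d, A.indicator (fun s' => pathProb κ ω s') s

/-- Quenched probability, `ℝ≥0∞`-valued. -/
def qPE (κ : Config d → Step d → ℝ) (ω : Config d) {n : ℕ} (A : Set (Fin n → Step d)) : ℝ≥0∞ :=
  ENNReal.ofReal (qP κ ω A)

/-- The environment-step space `Ω_0 × 𝕌_d`. -/
abbrev EnvSp (d : ℕ) := Config d × Step d

/-- The pair empirical measure `ℒ_n` as a measure. -/
def empMeas (ω : Config d) {n : ℕ} (s : Fin n → Step d) : Measure (EnvSp d) :=
  (n : ℝ≥0∞)⁻¹ • ∑ k : Fin n, Measure.dirac (envPair ω s k)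

lemma empMeas_isProb (ω : Config d) {n : ℕ} (hn : n ≠ 0) (s : Fin n → Step d) :
    IsProbabilityMeasure (empMeas ω s) := by
  constructor
  simp only [empMeas, Measure.smul_apply, Measure.coe_finset_sum, Finset.sum_apply,
    Measure.dirac_apply_of_mem (Set.mem_univ _), smul_eq_mul]
  rw [Finset.sum_const, Finset.card_univ, Fintype.card_fin, nsmul_eq_mul, mul_one,
    ENNReal.inv_mul_cancel]
  · exact_mod_cast hn
  · exact ENNReal.natCast_ne_top n

/-- The pair empirical measure `ℒ_{n+1}` as a probability measure. -/
def empPM (ω : Config d) {n : ℕ} (s : Fin (n + 1) → Step d) : ProbabilityMeasure (EnvSp d) :=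
  ⟨empMeas ω s, empMeas_isProb ω (Nat.succ_ne_zero n) s⟩

/-- First marginal `(μ)_1` of a measure on `Ω_0 × 𝕌_d`. -/
def marg1 (μ : Measure (EnvSp d)) : Measure (Config d) := μ.map Prod.fst

/-- Second marginal `(μ)_2` of a measure on `Ω_0 × 𝕌_d`. -/
def marg2 (μ : Measure (EnvSp d)) : Measure (Config d) := μ.map (fun q => shift q.2.1 q.1)

/-- The slice `dμ(·, e)` of a measure on `Ω_0 × 𝕌_d` at a fixed step `e`. -/
def slice (μ : Measure (EnvSp d)) (e : Step d) : Measure (Config d) :=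
  (μ.restrict (Set.univ ×ˢ {e})).map Prod.fst

/-- The space `ℳ_1⋆`: probability measures on `Ω_0 × 𝕌_d` whose two marginals coincide and
are absolutely continuous w.r.t. `P₀`, and whose densities `dμ(ω,e)/d(μ)_1(ω)` are positive
precisely on open edges, `P₀`-a.s. -/
def M1star (d : ℕ) (P₀ : Measure (Config d)) : Set (ProbabilityMeasure (EnvSp d)) :=
  {μ | marg1 μ.toMeasure = marg2 μ.toMeasure ∧ marg1 μ.toMeasure ≪ P₀ ∧
    ∃ ρ : Step d → Config d → ℝ≥0∞, (∀ e, Measurable (ρ e)) ∧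
      (∀ e, slice μ.toMeasure e = (marg1 μ.toMeasure).withDensity (ρ e)) ∧
      (∀ e : Step d, ∀ᵐ ω ∂P₀, (0 < ρ e ω ↔ edgeOpen ω 0 e.1))}

/-- The reference measure `π_ω(0,e) d(μ)_1(ω)` on `Ω_0 × 𝕌_d`. -/
def refM (μ : Measure (EnvSp d)) : Measure (EnvSp d) :=
  Measure.sum (fun e : Step d =>
    ((marg1 μ).withDensity (fun ω => ENNReal.ofReal (trans ω 0 e.1))).map (fun ω => (ω, e)))

/-- `x log x - x + 1`. -/
def klFun (x : ℝ) : ℝ := x * Real.log x - x + 1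

open Classical in
/-- The entropy functional `ℑ` (a relative entropy with respect to `refM μ`;
it equals `∫ Σ_e dμ(ω,e) log[dμ(ω,e) / (d(μ)_1(ω) π_ω(0,e))]` on `ℳ_1⋆` and `∞` otherwise). -/
def entI (P₀ : Measure (Config d)) (μ : ProbabilityMeasure (EnvSp d)) : ℝ≥0∞ :=
  if μ ∈ M1star d P₀ ∧ μ.toMeasure ≪ refM μ.toMeasure then
    ∫⁻ q, ENNReal.ofReal (klFun ((μ.toMeasure.rnDeriv (refM μ.toMeasure)) q).toReal)
      ∂(refM μ.toMeasure)
  else ∞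

/-- The pairing `⟨f, μ⟩`. -/
def pairing (f : EnvSp d → ℝ) (μ : ProbabilityMeasure (EnvSp d)) : ℝ :=
  ∫ q, f q ∂μ.toMeasure

/-- The Fenchel–Legendre transform `ℑ⋆` of `ℑ`. -/
def entIstar (P₀ : Measure (Config d)) (f : BoundedContinuousFunction (EnvSp d) ℝ) : EReal :=
  ⨆ μ : ProbabilityMeasure (EnvSp d),
    ((pairing f μ : ℝ) : EReal) - ((entI P₀ μ : ℝ≥0∞) : EReal)

/-- The double Fenchel–Legendre transform `ℑ⋆⋆` of `ℑ`. -/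
def entIbis (P₀ : Measure (Config d)) (μ : ProbabilityMeasure (EnvSp d)) : EReal :=
  ⨆ f : BoundedContinuousFunction (EnvSp d) ℝ,
    ((pairing f μ : ℝ) : EReal) - entIstar P₀ f

/-- The contraction map `ξ(μ) = ∫ Σ_e e dμ(ω,e)`. -/
def xi (μ : ProbabilityMeasure (EnvSp d)) : Fin d → ℝ :=
  fun i => ∫ q, ((q.2.1 i : ℤ) : ℝ) ∂μ.toMeasure

/-- The mean velocity `X_n / n` of a trajectory. -/
def meanVel {n : ℕ} (s : Fin n → Step d) : Fin d → ℝ :=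
  fun i => (n : ℝ)⁻¹ * ((pos s n) i : ℝ)

/-- The class `Π̃` of environment transition kernels. -/
def PiT (d : ℕ) (P₀ : Measure (Config d)) : Set (Config d → Step d → ℝ) :=
  {κ | (∀ e : Step d, Measurable (fun ω => κ ω e)) ∧
    (∀ ω e, 0 ≤ κ ω e) ∧ (∀ e : Step d, ∀ᵐ ω ∂P₀, κ ω e ≤ 1) ∧
    (∀ᵐ ω ∂P₀, ∑ e : Step d, κ ω e = 1) ∧
    (∀ e : Step d, ∀ᵐ ω ∂P₀, (κ ω e = 0 ↔ trans ω 0 e.1 = 0))}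

/-- `φ dP₀` is an invariant probability density for the kernel `κ`. -/
def IsInvDensity (P₀ : Measure (Config d)) (κ : Config d → Step d → ℝ)
    (φ : Config d → ℝ) : Prop :=
  Measurable φ ∧ (∀ ω, 0 ≤ φ ω) ∧ (∫ ω, φ ω ∂P₀) = 1 ∧
    (∀ᵐ ω ∂P₀, φ ω = ∑ e : Step d, κ (shift (-e.1) ω) e * φ (shift (-e.1) ω))

/-- The set `ℰ` of pairs `(π̃, φ)`. -/
def Epairs (d : ℕ) (P₀ : Measure (Config d)) :
    Set ((Config d → Step d → ℝ) × (Config d → ℝ)) :=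
  {q | q.1 ∈ PiT d P₀ ∧ IsInvDensity P₀ q.1 q.2}

/-- The measure `dμ(ω,e) = π̃(ω,e) φ(ω) dP₀(ω)` associated with a pair `(π̃, φ)`. -/
def pairMeasure (P₀ : Measure (Config d)) (κ : Config d → Step d → ℝ)
    (φ : Config d → ℝ) : Measure (EnvSp d) :=
  Measure.sum (fun e : Step d =>
    (P₀.withDensity (fun ω => ENNReal.ofReal (κ ω e * φ ω))).map (fun ω => (ω, e)))

/-- The kernel `dμ/d(μ)_1` associated with a measure on `Ω_0 × 𝕌_d`. -/
def toKappa (μ : Measure (EnvSp d)) : Config d → Step d → ℝ :=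
  fun ω e => ((slice μ e).rnDeriv (marg1 μ) ω).toReal

/-- The density `d(μ)_1/dP₀` associated with a measure on `Ω_0 × 𝕌_d`. -/
def toPhi (P₀ : Measure (Config d)) (μ : Measure (EnvSp d)) : Config d → ℝ :=
  fun ω => ((marg1 μ).rnDeriv P₀ ω).toReal

/-- The environment Markov transition operator `R_κ`. -/
def kernelStep (κ : Config d → Step d → ℝ) (f : Config d → ℝ) : Config d → ℝ :=
  fun ω => ∑ e : Step d, κ ω e * f (shift e.1 ω)

/-- `Q` is an invariant measure for the environment kernel `R_κ`. -/
def IsInvariant (κ : Config d → Step d → ℝ) (Q : Measure (Config d)) : Prop :=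
  ∀ f : Config d → ℝ, Measurable f → (∃ C, ∀ ω, |f ω| ≤ C) →
    ∫ ω, kernelStep κ f ω ∂Q = ∫ ω, f ω ∂Q

/-- Partial sum `Σ_{k<m} f(τ_{X_k}ω, X_{k+1}-X_k)` along a trajectory of length `N`. -/
def partialSumF (f : EnvSp d → ℝ) (ω : Config d) {N : ℕ} (s : Fin N → Step d) (m : ℕ) : ℝ :=
  ∑ k ∈ Finset.univ.filter (fun k : Fin N => (k : ℕ) < m), f (envPair ω s k)

/-- The sum of `G` along the path `γ` up to time `n`. -/
def pathSum (G : Config d → V d → ℝ) (ω : Config d) (γ : ℕ → V d) (n : ℕ) : ℝ :=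
  ∑ k ∈ Finset.range n, G (shift (γ k) ω) (γ (k + 1) - γ k)

/-- The class `𝒢_∞` of gradients: zero mean, uniformly bounded, closed loops. -/
def Ginfty (d : ℕ) (P₀ : Measure (Config d)) : Set (Config d → V d → ℝ) :=
  {G | (∀ e ∈ Ud d, Measurable (fun ω => G ω e)) ∧
    (∀ e ∈ Ud d, ∫ ω, G ω e ∂P₀ = 0) ∧
    (∃ M : ℝ, ∀ e ∈ Ud d, ∀ᵐ ω ∂P₀, |G ω e| ≤ M) ∧
    (∀ᵐ ω ∂P₀, ∀ (γ : ℕ → V d) (n : ℕ),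
      memCluster ω (γ 0) → IsOpenPath ω γ n → γ n = γ 0 → pathSum G ω γ n = 0)}

open Classical in
/-- The corrector `Ψ(ω,x)`: the sum of `G` along some open path from `0` to `x`. -/
def corr (G : Config d → V d → ℝ) (ω : Config d) (x : V d) : ℝ :=
  if h : ∃ q : (ℕ → V d) × ℕ, q.1 0 = 0 ∧ q.1 q.2 = x ∧ IsOpenPath ω q.1 q.2
  then pathSum G ω h.choose.1 h.choose.2 else 0

/-- The chemical distance: minimal length of an open path joining `x` and `y`. -/
def chemDist (ω : Config d) (x y : V d) : ℕ :=
  sInf {n : ℕ | ∃ γ : ℕ → V d, γ 0 = x ∧ γ n = y ∧ IsOpenPath ω γ n}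

open Classical in
/-- The functional `Λ(f,G)`. -/
def Lam (P₀ : Measure (Config d)) (f : EnvSp d → ℝ) (G : Config d → V d → ℝ) : EReal :=
  essSup (fun ω => ((Real.log (∑ e : Step d,
    if edgeOpen ω 0 e.1 then trans ω 0 e.1 * Real.exp (f (ω, e) + G ω e.1) else 0)) : EReal)) P₀

/-- The variational formula `H̄(f) = sup_{μ ∈ ℳ_1⋆} {⟨f,μ⟩ - ℑ(μ)}`. -/
def Hbar (P₀ : Measure (Config d)) (f : EnvSp d → ℝ) : EReal :=
  ⨆ μ ∈ M1star d P₀, ((pairing f μ : ℝ) : EReal) - ((entI P₀ μ : ℝ≥0∞) : EReal)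

/-- The finite σ-algebra `𝓑_k` recording all bonds in the box of size `k` around the origin. -/
def Bsig (d k : ℕ) : MeasurableSpace (Config d) :=
  MeasurableSpace.comap
    (fun (ω : Config d) (b : {b : EdgeIx d // ∀ i, |b.1 i| ≤ (k : ℤ)}) => ω b.1) inferInstance

end SRWPC

/-!
The quenched walk is read off a skew product: the environment moves by `ω ↦ shift (F ω u) ω`, where
`F ω u` is a step with law `κ ω` when the noise `u` is uniform on the unit interval, and fresh
independent noise is used at each time. Invariance of `φ` says that `φ P₀` is stationary for this
random map, so the claim is Birkhoff's theorem for the skew product, once the latter is ergodic and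
`P₀` is absolutely continuous with respect to `φ P₀`.

Both facts have the same source. A set of environments preserved almost surely by every step along
an open edge is seen either from all vertices of an infinite cluster or from none. The infinite
cluster being unique (Burton–Keane: trifurcations would be too many for the boundary of a large
box), "seen from somewhere in the infinite cluster" is a translation invariant event, to which the
zero–one law for `P` applies. For the zero set of `φ` this gives `φ > 0`; for invariant sets
of the random map it gives ergodicity.

The only properties of Bernoulli percolation this uses are invariance and ergodicity under
translations and insertion tolerance.
-/

namespace SRWPC

/-! ### The pointwise ergodic theorem -/

section Birkhoff

variable {α : Type*}

/-- The running maximum `max (0, S₁ f, …, Sₙ f)` of the Birkhoff sums of `f`, defined through the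
recursion `Sₙ₊₁ f = f + Sₙ f ∘ T` that the ergodic theorem exploits. -/
def maxBirkhoffSum (T : α → α) (f : α → ℝ) : ℕ → α → ℝ
  | 0, _ => 0
  | n + 1, x => max 0 (f x + maxBirkhoffSum T f n (T x))

lemma maxBirkhoffSum_nonneg (T : α → α) (f : α → ℝ) (n : ℕ) (x : α) :
    0 ≤ maxBirkhoffSum T f n x := by
  cases n <;> simp [maxBirkhoffSum]

lemma maxBirkhoffSum_le_succ (T : α → α) (f : α → ℝ) (n : ℕ) (x : α) :
    maxBirkhoffSum T f n x ≤ maxBirkhoffSum T f (n + 1) x := by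
  induction n generalizing x with
  | zero => exact maxBirkhoffSum_nonneg T f 1 x
  | succ n ih => exact max_le_max le_rfl (by gcongr; exact ih (T x))

lemma birkhoffSum_le_maxBirkhoffSum (T : α → α) (f : α → ℝ) (n : ℕ) (x : α) :
    birkhoffSum T f n x ≤ maxBirkhoffSum T f n x := by
  induction n generalizing x with
  | zero => simp [maxBirkhoffSum]
  | succ n ih =>
    rw [birkhoffSum_succ', maxBirkhoffSum]
    exact le_max_of_le_right (by gcongr; exact ih (T x))

lemma maxBirkhoffSum_succ_sub (T : α → α) (f : α → ℝ) (n : ℕ) (x : α) :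
    maxBirkhoffSum T f (n + 1) x - maxBirkhoffSum T f n (T x) =
      max (-maxBirkhoffSum T f n (T x)) (f x) := by
  rw [maxBirkhoffSum, ← max_sub_sub_right, zero_sub, add_sub_cancel_right]

lemma bddAbove_birkhoffSum_apply_iff (T : α → α) (f : α → ℝ) (x : α) :
    BddAbove (Set.range fun n ↦ birkhoffSum T f n (T x)) ↔
      BddAbove (Set.range fun n ↦ birkhoffSum T f n x) := by
  simp only [bddAbove_def, Set.forall_mem_range]
  constructor
  · rintro ⟨C, hC⟩
    refine ⟨max 0 (f x + C), fun n ↦ ?_⟩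
    cases n with
    | zero => simp
    | succ n =>
      rw [birkhoffSum_succ']
      exact le_max_of_le_right (by gcongr; exact hC n)
  · rintro ⟨C, hC⟩
    refine ⟨C - f x, fun n ↦ ?_⟩
    have := hC (n + 1)
    rw [birkhoffSum_succ'] at this
    linarith

variable [MeasurableSpace α] {μ : Measure α} {T : α → α} {f : α → ℝ}

lemma integrable_maxBirkhoffSum (hT : MeasurePreserving T μ μ) (hf : Integrable f μ) (n : ℕ) :
    Integrable (maxBirkhoffSum T f n) μ := by
  induction n with
  | zero => exact integrable_zero _ _ _
  | succ n ih => exact (integrable_zero _ _ _).sup (hf.add (hT.integrable_comp_of_integrable ih))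

lemma integral_nonneg_of_not_bddAbove_birkhoffSum (hT : MeasurePreserving T μ μ)
    (hf : Integrable f μ)
    (h : ∀ᵐ x ∂μ, ¬BddAbove (Set.range fun n ↦ birkhoffSum T f n x)) :
    0 ≤ ∫ x, f x ∂μ := by
  let M := maxBirkhoffSum T f
  have hM : ∀ n, Integrable (M n) μ := integrable_maxBirkhoffSum hT hf
  have hMT : ∀ n, Integrable (fun x ↦ M n (T x)) μ :=
    fun n ↦ hT.integrable_comp_of_integrable (hM n)
  have h_nonneg (n : ℕ) : 0 ≤ ∫ x, (M (n + 1) x - M n (T x)) ∂μ := by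
    have hint : ∫ x, M n (T x) ∂μ = ∫ x, M n x ∂μ := by
      conv_rhs => rw [← hT.map_eq]
      exact (integral_map hT.aemeasurable (by rw [hT.map_eq]; exact (hM n).1)).symm
    rw [integral_sub (hM _) (hMT n), hint, sub_nonneg]
    exact integral_mono (hM n) (hM _) (maxBirkhoffSum_le_succ T f n)
  have hdiff (n : ℕ) (x : α) : M (n + 1) x - M n (T x) = max (-M n (T x)) (f x) :=
    maxBirkhoffSum_succ_sub T f n x
  refine ge_of_tendsto' (tendsto_integral_of_dominated_convergence
    (F := fun n x ↦ M (n + 1) x - M n (T x)) (fun x ↦ |f x|)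
    (fun n ↦ ((hM (n + 1)).sub (hMT n)).1) hf.abs (fun n ↦ .of_forall fun x ↦ ?_) ?_) h_nonneg
  · have := maxBirkhoffSum_nonneg T f n (T x)
    rw [hdiff, Real.norm_eq_abs, abs_le]
    exact ⟨le_max_of_le_right (neg_abs_le _),
      max_le (by linarith [abs_nonneg (f x)]) (le_abs_self _)⟩
  · filter_upwards [h] with x hx
    rw [← bddAbove_birkhoffSum_apply_iff, not_bddAbove_iff] at hx
    obtain ⟨_, ⟨m, rfl⟩, hm⟩ := hx (-f x)
    refine tendsto_const_nhds.congr' ((eventually_ge_atTop m).mono fun n hn ↦ ?_)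
    have : M m (T x) ≤ M n (T x) := monotone_nat_of_le_succ
      (fun k ↦ maxBirkhoffSum_le_succ T f k (T x)) hn
    simp only [hdiff]
    rw [max_eq_right]
    linarith [birkhoffSum_le_maxBirkhoffSum T f m (T x)]

lemma ae_bddAbove_birkhoffSum (hT : Ergodic T μ) (hf : Integrable f μ) (hneg : ∫ x, f x ∂μ < 0) :
    ∀ᵐ x ∂μ, BddAbove (Set.range fun n ↦ birkhoffSum T f n x) := by
  have hS (n : ℕ) : AEMeasurable (birkhoffSum T f n) μ :=
    Finset.aemeasurable_fun_sum _ fun k _ ↦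
      hf.aemeasurable.comp_quasiMeasurePreserving (hT.iterate k).quasiMeasurePreserving
  let B := {x | BddAbove (Set.range fun n ↦ birkhoffSum T f n x)}
  have hB : NullMeasurableSet B μ := by
    have : B = ⋃ C : ℕ, ⋂ n, {x | birkhoffSum T f n x ≤ C} := by
      ext x
      simp only [B, bddAbove_def, Set.forall_mem_range, Set.mem_ofPred_eq, Set.mem_iUnion,
        Set.mem_iInter]
      exact ⟨fun ⟨C, hC⟩ ↦ (exists_nat_ge C).imp fun _ hN n ↦ (hC n).trans hN,
        fun ⟨C, hC⟩ ↦ ⟨C, hC⟩⟩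
    rw [this]
    exact .iUnion fun C ↦ .iInter fun n ↦ nullMeasurableSet_le (hS n) aemeasurable_const
  refine (hT.quasiErgodic.ae_mem_or_ae_notMem₀ hB ?_).resolve_right fun h ↦ hneg.not_ge ?_
  · exact .of_forall fun x ↦ propext (bddAbove_birkhoffSum_apply_iff T f x)
  · exact integral_nonneg_of_not_bddAbove_birkhoffSum hT.toMeasurePreserving hf h

lemma ae_eventually_birkhoffAverage_lt [IsProbabilityMeasure μ] (hT : Ergodic T μ)
    (hf : Integrable f μ) {a : ℝ} (ha : ∫ x, f x ∂μ < a) :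
    ∀ᵐ x ∂μ, ∀ᶠ n in atTop, birkhoffAverage ℝ T f n x < a := by
  obtain ⟨b, hb, hba⟩ := exists_between ha
  have hneg : ∫ x, (f x - b) ∂μ < 0 := by
    rw [integral_sub hf (integrable_const b)]
    simpa using hb
  filter_upwards [ae_bddAbove_birkhoffSum hT (hf.sub (integrable_const b)) hneg] with x ⟨C, hC⟩
  have hsum (n : ℕ) : birkhoffSum T f n x ≤ C + n * b := by
    have := hC ⟨n, rfl⟩
    simp only [birkhoffSum, Pi.sub_apply, Finset.sum_sub_distrib, Finset.sum_const,
      Finset.card_range, nsmul_eq_mul] at this ⊢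
    linarith
  have hlim : Tendsto (fun n : ℕ ↦ C / n + b) atTop (𝓝 b) := by
    simpa using (tendsto_const_div_atTop_nhds_zero_nat C).add_const b
  filter_upwards [hlim.eventually_lt_const hba, eventually_gt_atTop 0] with n hn hn0
  have hn0' : (0 : ℝ) < n := by exact_mod_cast hn0
  refine lt_of_le_of_lt ?_ hn
  rw [birkhoffAverage, smul_eq_mul, inv_mul_le_iff₀ hn0']
  calc birkhoffSum T f n x ≤ C + n * b := hsum n
    _ = n * (C / n + b) := by field_simp

theorem ae_tendsto_birkhoffAverage [IsProbabilityMeasure μ] (hT : Ergodic T μ)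
    (hf : Integrable f μ) :
    ∀ᵐ x ∂μ, Tendsto (fun n ↦ birkhoffAverage ℝ T f n x) atTop (𝓝 (∫ x, f x ∂μ)) := by
  have upper {g : α → ℝ} (hg : Integrable g μ) : ∀ᵐ x ∂μ, ∀ k : ℕ, ∀ᶠ n in atTop,
      birkhoffAverage ℝ T g n x < ∫ x, g x ∂μ + 1 / (k + 1) :=
    ae_all_iff.2 fun k ↦ ae_eventually_birkhoffAverage_lt hT hg
      (lt_add_of_pos_right _ Nat.one_div_pos_of_nat)
  filter_upwards [upper hf, upper hf.neg] with x hx hx'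
  refine Metric.tendsto_nhds.2 fun ε hε ↦ ?_
  obtain ⟨k, hk⟩ := exists_nat_one_div_lt hε
  filter_upwards [hx k, hx' k] with n h h'
  rw [birkhoffAverage_neg, integral_neg', Pi.neg_apply, Pi.neg_apply] at h'
  rw [Real.dist_eq, abs_lt]
  constructor <;> linarith

end Birkhoff

/-! ### Skew products over independent noise -/

section RandomMaps

variable {S U : Type*}

/-- The sequence `v, u₀, u₁, …`. -/
def consSeq (v : U) (u : ℕ → U) : ℕ → U
  | 0 => v
  | n + 1 => u n

/-- The skew product over the one-sided shift on noise sequences: `Φ` moves the state using the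
first noise variable, which is then discarded. -/
def skewProduct (Φ : S → U → S) (q : S × (ℕ → U)) : S × (ℕ → U) :=
  (Φ q.1 (q.2 0), fun n ↦ q.2 (n + 1))

lemma skewProduct_consSeq (Φ : S → U → S) (s : S) (v : U) (u : ℕ → U) :
    skewProduct Φ (s, consSeq v u) = (Φ s v, u) := rfl

lemma consSeq_mem_pi_range_succ (t : ℕ → Set U) (n : ℕ) (v : U) (u : ℕ → U) :
    consSeq v u ∈ Set.pi (Finset.range (n + 1)) t ↔
      v ∈ t 0 ∧ u ∈ Set.pi (Finset.range n) fun i ↦ t (i + 1) := by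
  simp only [Set.mem_pi, Finset.coe_range, Set.mem_Iio]
  refine ⟨fun h ↦ ⟨h 0 n.succ_pos, fun i hi ↦ h (i + 1) (by lia)⟩, ?_⟩
  rintro ⟨h0, h⟩ (_ | i) hi
  exacts [h0, h i (by lia)]

variable [MeasurableSpace S] [MeasurableSpace U]

lemma measurable_consSeq : Measurable (Function.uncurry (consSeq (U := U))) := by
  refine measurable_pi_iff.2 fun n ↦ ?_
  cases n with
  | zero => exact measurable_fst
  | succ n => exact (measurable_pi_apply n).comp measurable_snd

lemma measurable_skewProduct {Φ : S → U → S} (hΦ : Measurable (Function.uncurry Φ)) :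
    Measurable (skewProduct Φ) :=
  (hΦ.comp (measurable_fst.prodMk ((measurable_pi_apply 0).comp measurable_snd))).prodMk
    (measurable_pi_iff.2 fun n ↦ (measurable_pi_apply (n + 1)).comp measurable_snd)

lemma ext_of_pi_range {ρ ρ' : Measure (ℕ → U)} [IsFiniteMeasure ρ]
    (h : ∀ (n : ℕ) (t : ℕ → Set U), (∀ i, MeasurableSet (t i)) →
      ρ (Set.pi (Finset.range n) t) = ρ' (Set.pi (Finset.range n) t)) : ρ = ρ' := by
  classical
  refine ext_of_generate_finite (squareCylinders fun _ ↦ {A : Set U | MeasurableSet A})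
    generateFrom_squareCylinders.symm (isPiSystem_squareCylinders
      (fun _ ↦ MeasurableSpace.isPiSystem_measurableSet) fun _ ↦ .univ) ?_
    (by simpa using h 0 (fun _ ↦ Set.univ) fun _ ↦ .univ)
  rintro _ ⟨s, t, ht, rfl⟩
  obtain ⟨n, hn⟩ := s.exists_nat_subset_range
  have hpad : Set.pi s t = Set.pi (Finset.range n) fun i ↦ if i ∈ s then t i else Set.univ := by
    ext u
    simp only [Set.mem_pi]
    refine forall_congr' fun i ↦ ?_
    by_cases hi : i ∈ s
    · simp [hi, Finset.mem_range.1 (hn hi)]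
    · simp [hi]
  rw [hpad]
  refine h n _ fun i ↦ ?_
  split_ifs
  exacts [ht i trivial, .univ]

/-- The law of a sequence of independent variables with common law `ν`. -/
abbrev iidLaw (ν : Measure U) : Measure (ℕ → U) :=
  Measure.infinitePi fun _ : ℕ ↦ ν

variable {μ : Measure S} {ν : Measure U} [IsProbabilityMeasure ν] {Φ : S → U → S}

lemma measurePreserving_consSeq :
    MeasurePreserving (Function.uncurry consSeq) (ν.prod (iidLaw ν)) (iidLaw ν) := by
  have := Measure.isProbabilityMeasure_map (μ := ν.prod (iidLaw ν)) measurable_consSeq.aemeasurable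
  refine ⟨measurable_consSeq, ext_of_pi_range fun n t ht ↦ ?_⟩
  rw [Measure.map_apply measurable_consSeq (.pi (Finset.countable_toSet _) fun i _ ↦ ht i)]
  cases n with
  | zero => simp
  | succ n =>
    have hpre : Function.uncurry consSeq ⁻¹' Set.pi (Finset.range (n + 1)) t =
        t 0 ×ˢ Set.pi (Finset.range n) fun i ↦ t (i + 1) := by
      ext ⟨v, u⟩
      exact consSeq_mem_pi_range_succ t n v u
    rw [hpre, Measure.prod_prod, Measure.infinitePi_pi _ fun i _ ↦ ht _,
      Measure.infinitePi_pi _ fun i _ ↦ ht _, Finset.prod_range_succ', mul_comm]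

lemma iidLaw_apply_eq_lintegral {D : Set (ℕ → U)} (hD : MeasurableSet D) :
    iidLaw ν D = ∫⁻ v, iidLaw ν (consSeq v ⁻¹' D) ∂ν := by
  conv_lhs => rw [← (measurePreserving_consSeq (ν := ν)).map_eq]
  rw [Measure.map_apply measurable_consSeq hD, Measure.prod_apply (measurable_consSeq hD)]
  rfl

lemma ae_iidLaw_section_inter_pi_range
    (hΦ : MeasurePreserving (Function.uncurry Φ) (μ.prod ν) μ) {E : Set (S × (ℕ → U))}
    (hE : MeasurableSet E) (hinv : skewProduct Φ ⁻¹' E = E) {c : ℝ≥0∞}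
    (hc : ∀ᵐ s ∂μ, iidLaw ν (Prod.mk s ⁻¹' E) = c) (n : ℕ) (t : ℕ → Set U)
    (ht : ∀ i, MeasurableSet (t i)) :
    ∀ᵐ s ∂μ, iidLaw ν (Prod.mk s ⁻¹' E ∩ Set.pi (Finset.range n) t) =
      c * iidLaw ν (Set.pi (Finset.range n) t) := by
  induction n generalizing t with
  | zero => simpa using hc
  | succ n ih =>
    have ih' := hΦ.quasiMeasurePreserving.ae (ih (fun i ↦ t (i + 1)) fun i ↦ ht _)
    filter_upwards [Measure.ae_ae_of_ae_prod ih'] with s hs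
    have hbox : MeasurableSet (Set.pi (Finset.range (n + 1)) t : Set (ℕ → U)) :=
      .pi (Finset.countable_toSet _) fun i _ ↦ ht i
    have hsection (v : U) : consSeq v ⁻¹' (Prod.mk s ⁻¹' E) = Prod.mk (Φ s v) ⁻¹' E := by
      conv_lhs => rw [← hinv]
      rfl
    have hpre (v : U) : consSeq v ⁻¹' (Prod.mk s ⁻¹' E ∩ Set.pi (Finset.range (n + 1)) t) =
        {u | v ∈ t 0 ∧ u ∈ Prod.mk (Φ s v) ⁻¹' E ∩ Set.pi (Finset.range n) fun i ↦ t (i + 1)} := by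
      rw [Set.preimage_inter, hsection]
      ext u
      simp only [Set.mem_inter_iff, Set.mem_preimage, consSeq_mem_pi_range_succ,
        Set.mem_ofPred_eq]
      tauto
    have hstep : ∀ᵐ v ∂ν, iidLaw ν
        (consSeq v ⁻¹' (Prod.mk s ⁻¹' E ∩ Set.pi (Finset.range (n + 1)) t)) =
        (t 0).indicator (fun _ ↦ c * iidLaw ν (Set.pi (Finset.range n) fun i ↦ t (i + 1))) v := by
      filter_upwards [hs] with v hv
      rw [hpre]
      by_cases h0 : v ∈ t 0
      · simp only [h0, true_and, Set.indicator_of_mem]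
        exact hv
      · simp [h0]
    rw [iidLaw_apply_eq_lintegral ((measurable_prodMk_left hE).inter hbox),
      lintegral_congr_ae hstep, lintegral_indicator (ht 0), lintegral_const,
      Measure.restrict_apply_univ, Measure.infinitePi_pi _ fun i _ ↦ ht _,
      Measure.infinitePi_pi _ fun i _ ↦ ht _, Finset.prod_range_succ', mul_assoc]

variable [IsProbabilityMeasure μ]

lemma measurePreserving_skewProduct (hΦ : MeasurePreserving (Function.uncurry Φ) (μ.prod ν) μ) :
    MeasurePreserving (skewProduct Φ) (μ.prod (iidLaw ν)) (μ.prod (iidLaw ν)) := by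
  have hcons : MeasurePreserving (Prod.map id (Function.uncurry consSeq) ∘
      MeasurableEquiv.prodAssoc) ((μ.prod ν).prod (iidLaw ν)) (μ.prod (iidLaw ν)) :=
    ((MeasurePreserving.id μ).prod measurePreserving_consSeq).comp
      (measurePreserving_prodAssoc μ ν (iidLaw ν))
  rw [← hcons.map_eq]
  refine (MeasurePreserving.map_of_comp ?_ (measurable_skewProduct hΦ.measurable) hcons.measurable)
  rw [hcons.map_eq]
  exact hΦ.prod (MeasurePreserving.id _)

/-- In `L²`, the squared increment of `H` integrates to
`∫ H² - 2 ∫ H · H + ∫ H² = 0` by stationarity and harmonicity. -/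
lemma ae_eq_of_integral_eq_self (hΦ : MeasurePreserving (Function.uncurry Φ) (μ.prod ν) μ)
    {H : S → ℝ} (hH : MemLp H 2 μ) (hharm : ∀ᵐ s ∂μ, ∫ v, H (Φ s v) ∂ν = H s) :
    ∀ᵐ q ∂μ.prod ν, H (Φ q.1 q.2) = H q.1 := by
  have hfst : MeasurePreserving Prod.fst (μ.prod ν) μ := measurePreserving_fst
  have hpast : MemLp (fun q : S × U ↦ H q.1) 2 (μ.prod ν) := hH.comp_measurePreserving hfst
  have hnext : MemLp (fun q : S × U ↦ H (Φ q.1 q.2)) 2 (μ.prod ν) :=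
    hH.comp_measurePreserving hΦ
  have hcross : Integrable (fun q : S × U ↦ H q.1 * H (Φ q.1 q.2)) (μ.prod ν) :=
    hpast.integrable_mul hnext
  have hint_past : ∫ q, H q.1 ^ 2 ∂μ.prod ν = ∫ s, H s ^ 2 ∂μ := by
    conv_rhs => rw [← hfst.map_eq]
    exact (integral_map hfst.aemeasurable (by rw [hfst.map_eq]; exact hH.1.pow 2)).symm
  have hint_next : ∫ q, H (Φ q.1 q.2) ^ 2 ∂μ.prod ν = ∫ s, H s ^ 2 ∂μ := by
    conv_rhs => rw [← hΦ.map_eq]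
    exact (integral_map hΦ.aemeasurable (by rw [hΦ.map_eq]; exact hH.1.pow 2)).symm
  have hint_cross : ∫ q, H q.1 * H (Φ q.1 q.2) ∂μ.prod ν = ∫ s, H s ^ 2 ∂μ := by
    rw [integral_prod _ hcross]
    refine integral_congr_ae (hharm.mono fun s hs ↦ ?_)
    simp only [integral_const_mul, hs, sq]
  have hzero : ∫ q, (H (Φ q.1 q.2) - H q.1) ^ 2 ∂μ.prod ν = 0 := by
    have hexpand (q : S × U) : (H (Φ q.1 q.2) - H q.1) ^ 2 =
        H (Φ q.1 q.2) ^ 2 + H q.1 ^ 2 - 2 * (H q.1 * H (Φ q.1 q.2)) := by ring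
    simp only [hexpand]
    rw [integral_sub ?_ (hcross.const_mul 2),
      integral_add hnext.integrable_sq hpast.integrable_sq, integral_const_mul,
      hint_past, hint_next, hint_cross]
    · ring
    · exact hnext.integrable_sq.add hpast.integrable_sq
  have hae := (integral_eq_zero_iff_of_nonneg (fun q ↦ sq_nonneg _)
    (hnext.sub hpast).integrable_sq).1 hzero
  exact hae.mono fun q hq ↦ sub_eq_zero.1 (pow_eq_zero_iff two_ne_zero |>.1 hq)

/-- The Markov chain driven by `Φ`, with noise of law `ν` and stationary law `μ`, has only trivial
invariant sets. -/
def IsErgodicRandomMap (Φ : S → U → S) (μ : Measure S) (ν : Measure U) : Prop :=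
  ∀ A : Set S, MeasurableSet A → (∀ᵐ q ∂μ.prod ν, q.1 ∈ A ↔ Φ q.1 q.2 ∈ A) →
    (∀ᵐ s ∂μ, s ∈ A) ∨ ∀ᵐ s ∂μ, s ∉ A

lemma exists_ae_eq_const_of_integral_eq_self
    (hΦ : MeasurePreserving (Function.uncurry Φ) (μ.prod ν) μ) (herg : IsErgodicRandomMap Φ μ ν)
    {H : S → ℝ} (hHm : Measurable H) (hH : MemLp H 2 μ)
    (hharm : ∀ᵐ s ∂μ, ∫ v, H (Φ s v) ∂ν = H s) :
    ∃ c, H =ᵐ[μ] fun _ ↦ c := by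
  refine Filter.exists_eventuallyEq_const_of_forall_separating MeasurableSet fun V hV ↦
    herg (H ⁻¹' V) (hHm hV) ?_
  filter_upwards [ae_eq_of_integral_eq_self hΦ hH hharm] with q hq
  simp [hq]

lemma restrict_eq_smul_of_ae_section_eq
    (hΦ : MeasurePreserving (Function.uncurry Φ) (μ.prod ν) μ) {E : Set (S × (ℕ → U))}
    (hE : MeasurableSet E) (hinv : skewProduct Φ ⁻¹' E = E) {c : ℝ≥0∞}
    (hc : ∀ᵐ s ∂μ, iidLaw ν (Prod.mk s ⁻¹' E) = c) :
    (μ.prod (iidLaw ν)).restrict E = c • μ.prod (iidLaw ν) := by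
  refine Measure.ext_prod fun {B D} hB hD ↦ ?_
  have hmap (ρ : Measure (S × (ℕ → U))) {D : Set (ℕ → U)} (hD : MeasurableSet D) :
      ((ρ.restrict (B ×ˢ Set.univ)).map Prod.snd) D = ρ (B ×ˢ D) := by
    rw [Measure.map_apply measurable_snd hD, Measure.restrict_apply (measurable_snd hD)]
    congr 1
    ext
    simp [and_comm]
  rw [← hmap _ hD, ← hmap _ hD]
  congr 1
  refine ext_of_pi_range fun n t ht ↦ ?_
  have hbox : MeasurableSet (Set.pi (Finset.range n) t : Set (ℕ → U)) :=
    .pi (Finset.countable_toSet _) fun i _ ↦ ht i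
  have hfiber : ∀ᵐ s ∂μ, iidLaw ν (Prod.mk s ⁻¹' (B ×ˢ Set.pi (Finset.range n) t ∩ E)) =
      B.indicator (fun _ ↦ c * iidLaw ν (Set.pi (Finset.range n) t)) s := by
    filter_upwards [ae_iidLaw_section_inter_pi_range hΦ hE hinv hc n t ht] with s hs
    by_cases hsB : s ∈ B
    · simp only [Set.preimage_inter, Set.mk_preimage_prod_right hsB, Set.indicator_of_mem hsB]
      rw [Set.inter_comm, hs]
    · simp [Set.preimage_inter, Set.mk_preimage_prod_right_eq_empty hsB, hsB]
  rw [hmap _ hbox, hmap _ hbox, Measure.restrict_apply (hB.prod hbox), Measure.smul_apply,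
    Measure.prod_prod, Measure.prod_apply ((hB.prod hbox).inter hE), lintegral_congr_ae hfiber,
    lintegral_indicator hB, lintegral_const, Measure.restrict_apply_univ, smul_eq_mul]
  ring

theorem ergodic_skewProduct (hΦ : MeasurePreserving (Function.uncurry Φ) (μ.prod ν) μ)
    (herg : IsErgodicRandomMap Φ μ ν) :
    Ergodic (skewProduct Φ) (μ.prod (iidLaw ν)) where
  toMeasurePreserving := measurePreserving_skewProduct hΦ
  aeconst_set E hE hinv := by
    let h (s : S) : ℝ := (iidLaw ν).real (Prod.mk s ⁻¹' E)
    have hEm : Measurable fun s ↦ iidLaw ν (Prod.mk s ⁻¹' E) := measurable_measure_prodMk_left hE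
    have hharm (s : S) : ∫ v, h (Φ s v) ∂ν = h s := by
      have hsection (v : U) : Prod.mk (Φ s v) ⁻¹' E = consSeq v ⁻¹' (Prod.mk s ⁻¹' E) := by
        conv_rhs => rw [← hinv]
        rfl
      simp only [h, Measure.real]
      rw [iidLaw_apply_eq_lintegral (measurable_prodMk_left hE), ← integral_toReal]
      · simp only [hsection]
      · simp only [← hsection]
        exact (hEm.comp (hΦ.measurable.comp measurable_prodMk_left)).aemeasurable
      · exact .of_forall fun v ↦ measure_lt_top _ _
    obtain ⟨c, hc⟩ := exists_ae_eq_const_of_integral_eq_self hΦ herg hEm.ennreal_toReal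
      (.of_bound hEm.ennreal_toReal.aestronglyMeasurable 1 (.of_forall fun s ↦ by
        rw [Real.norm_of_nonneg ENNReal.toReal_nonneg]
        exact measureReal_le_one)) (.of_forall hharm)
    have hc' : ∀ᵐ s ∂μ, iidLaw ν (Prod.mk s ⁻¹' E) = ENNReal.ofReal c :=
      hc.mono fun s hs ↦ by
        rw [← show h s = c from hs]
        exact (ofReal_measureReal (measure_ne_top _ _)).symm
    have hrestrict := restrict_eq_smul_of_ae_section_eq hΦ hE hinv hc'
    set m := μ.prod (iidLaw ν)
    have hm : m E = ENNReal.ofReal c := by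
      rw [← Measure.restrict_apply_univ, hrestrict]
      simp
    have hidem : m E * m E = m E := by
      conv_rhs => rw [← Measure.restrict_apply_self, hrestrict]
      rw [Measure.smul_apply, smul_eq_mul, hm]
    rw [eventuallyConst_set']
    rcases eq_or_ne (m E) 0 with h0 | h0
    · exact .inl (ae_eq_empty.2 h0)
    · exact .inr (eventuallyEq_univ.2 ((prob_compl_eq_zero_iff hE).2
        ((ENNReal.mul_eq_left h0 (measure_ne_top _ _)).1 hidem)))

end RandomMaps

/-! ### Product measures -/

section ProductMeasure

variable {ι : Type*}

section Update

variable {X : ι → Type*} [∀ i, MeasurableSpace (X i)] (μ : ∀ i, Measure (X i))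
  [∀ i, IsProbabilityMeasure (μ i)]

lemma measurePreserving_update_infinitePi [DecidableEq ι] (b : ι) :
    MeasurePreserving (fun q : X b × (∀ i, X i) ↦ Function.update q.2 b q.1)
      ((μ b).prod (Measure.infinitePi μ)) (Measure.infinitePi μ) := by
  have hmeas : Measurable fun q : X b × (∀ i, X i) ↦ Function.update q.2 b q.1 :=
    measurable_update'.comp measurable_swap
  refine ⟨hmeas, Measure.eq_infinitePi μ fun s t ht ↦ ?_⟩
  have hpre : (fun q : X b × (∀ i, X i) ↦ Function.update q.2 b q.1) ⁻¹' Set.pi s t =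
      (if b ∈ s then t b else Set.univ) ×ˢ Set.pi (s.erase b : Finset ι) t := by
    ext ⟨v, ω⟩
    rw [Set.mem_preimage, Set.update_mem_pi_iff, Set.mem_prod, Finset.coe_erase, and_comm]
    by_cases hb : b ∈ s <;> simp [hb]
  rw [Measure.map_apply hmeas (.pi s.countable_toSet fun i _ ↦ ht i), hpre, Measure.prod_prod,
    Measure.infinitePi_pi μ fun i _ ↦ ht i]
  by_cases hb : b ∈ s
  · rw [if_pos hb, Finset.mul_prod_erase s (fun i ↦ μ i (t i)) hb]
  · rw [if_neg hb, measure_univ, one_mul, Finset.erase_eq_of_notMem hb]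

lemma quasiMeasurePreserving_update_infinitePi [DecidableEq ι] {b : ι} {a : X b}
    (ha : μ b {a} ≠ 0) :
    Measure.QuasiMeasurePreserving (fun ω : ∀ i, X i ↦ Function.update ω b a)
      (Measure.infinitePi μ) (Measure.infinitePi μ) := by
  refine ⟨measurable_update_left, .mk fun N hN hN0 ↦ ?_⟩
  have hae : ∀ᵐ q ∂(μ b).prod (Measure.infinitePi μ), Function.update q.2 b q.1 ∉ N :=
    (measurePreserving_update_infinitePi μ b).quasiMeasurePreserving.ae
      (measure_eq_zero_iff_ae_notMem.1 hN0)
  rw [Measure.map_apply measurable_update_left hN]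
  by_contra hpos
  refine ha (measure_mono_null ?_ (Measure.ae_ae_of_ae_prod hae))
  rintro _ rfl h
  exact hpos (measure_eq_zero_iff_ae_notMem.2 h)

lemma quasiMeasurePreserving_piecewise_infinitePi [DecidableEq ι] (D : Finset ι) {a : ∀ i, X i}
    (ha : ∀ b ∈ D, μ b {a b} ≠ 0) :
    Measure.QuasiMeasurePreserving (fun ω : ∀ i, X i ↦ D.piecewise a ω)
      (Measure.infinitePi μ) (Measure.infinitePi μ) := by
  induction D using Finset.induction_on with
  | empty =>
    simp only [Finset.piecewise_empty]
    exact .id _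
  | insert b D _ ih =>
    simp only [Finset.piecewise_insert]
    exact (quasiMeasurePreserving_update_infinitePi μ (ha b (D.mem_insert_self b))).comp
      (ih fun c hc ↦ ha c (Finset.mem_insert_of_mem hc))

end Update

open scoped symmDiff in
lemma measure_eq_zero_or_one_of_approx {Ω : Type*} [MeasurableSpace Ω] {P : Measure Ω}
    [IsProbabilityMeasure P] {A : Set Ω} (hA : MeasurableSet A)
    (h : ∀ ε : ℝ, 0 < ε → ∃ (C : Set Ω) (T : Ω → Ω), MeasurableSet C ∧ P.real (C ∆ A) ≤ ε ∧
      MeasurePreserving T P P ∧ T ⁻¹' A = A ∧ P (C ∩ T ⁻¹' C) = P C * P C) :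
    P A = 0 ∨ P A = 1 := by
  have happrox : ∀ ε : ℝ, 0 < ε → dist (P.real A) (P.real A * P.real A) ≤ ε := by
    intro ε hε
    obtain ⟨C, T, hC, hCA, hT, hTA, hmul⟩ := h (ε / 4) (by positivity)
    have hTCA : P.real ((T ⁻¹' C) ∆ A) ≤ ε / 4 := by
      rwa [← hTA, ← Set.preimage_symmDiff,
        hT.measureReal_preimage (hC.symmDiff hA).nullMeasurableSet]
    have hinter : |P.real (C ∩ T ⁻¹' C) - P.real A| ≤ ε / 4 + ε / 4 := by
      refine (abs_measureReal_sub_le_measureReal_symmDiff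
        (hC.inter (hT.measurable hC)).nullMeasurableSet hA.nullMeasurableSet).trans ?_
      refine (measureReal_mono (s₂ := (C ∆ A) ∪ (T ⁻¹' C) ∆ A) ?_).trans
        ((measureReal_union_le _ _).trans (add_le_add hCA hTCA))
      intro ω
      simp only [Set.mem_symmDiff, Set.mem_inter_iff, Set.mem_union]
      tauto
    have hdiff : |P.real C - P.real A| ≤ ε / 4 :=
      (abs_measureReal_sub_le_measureReal_symmDiff hC.nullMeasurableSet
        hA.nullMeasurableSet).trans hCA
    rw [measureReal_def, hmul, ENNReal.toReal_mul] at hinter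
    change |P.real C * P.real C - _| ≤ _ at hinter
    have hC0 : 0 ≤ P.real C := measureReal_nonneg
    have hC1 : P.real C ≤ 1 := measureReal_le_one
    have hA0 : 0 ≤ P.real A := measureReal_nonneg
    have hA1 : P.real A ≤ 1 := measureReal_le_one
    rw [Real.dist_eq]
    rw [abs_le] at *
    constructor <;> nlinarith
  have hidem : P.real A = P.real A * P.real A := eq_of_forall_dist_le happrox
  rcases eq_or_ne (P.real A) 0 with h0 | h0
  · left
    rwa [measureReal_eq_zero_iff] at h0
  · right
    rw [← ENNReal.toReal_eq_one_iff]
    exact mul_left_cancel₀ h0 (by rw [mul_one]; exact hidem.symm)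

variable {X : Type*} [MeasurableSpace X] (ν : Measure X) [IsProbabilityMeasure ν]

lemma measurePreserving_comp_infinitePi {e : ι → ι} (he : Function.Injective e) :
    MeasurePreserving (fun (ω : ι → X) i ↦ ω (e i)) (Measure.infinitePi fun _ ↦ ν)
      (Measure.infinitePi fun _ ↦ ν) :=
  ⟨measurable_pi_iff.2 fun _ ↦ measurable_pi_apply _,
    Measure.map_infinitePi_infinitePi_of_inj (P := fun _ ↦ ν) he⟩

lemma infinitePi_cylinder_inter_preimage {e : ι → ι} (he : Function.Injective e) {F : Finset ι}
    (hF : ∀ i ∈ F, e i ∉ F) {S : Set (F → X)} (hS : MeasurableSet S) :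
    Measure.infinitePi (fun _ ↦ ν) (cylinder F S ∩ (fun (ω : ι → X) i ↦ ω (e i)) ⁻¹' cylinder F S) =
      Measure.infinitePi (fun _ ↦ ν) (cylinder F S) *
        Measure.infinitePi (fun _ ↦ ν) (cylinder F S) := by
  classical
  have hdisj : Disjoint F (F.image e) := by
    rw [Finset.disjoint_right]
    intro _ hmem
    obtain ⟨i, hi, rfl⟩ := Finset.mem_image.1 hmem
    exact hF i hi
  have hindep : IndepFun (fun (ω : ι → X) (i : F) ↦ ω i) (fun ω (i : F.image e) ↦ ω i)
      (Measure.infinitePi fun _ ↦ ν) :=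
    (iIndepFun_infinitePi (P := fun _ ↦ ν) (X := fun _ ω ↦ ω) fun _ ↦ measurable_id).indepFun_finset
      F (F.image e) hdisj fun i ↦ measurable_pi_apply i
  have hpull : Measurable fun (g : F.image e → X) (i : F) ↦
      g ⟨e i, Finset.mem_image_of_mem e i.2⟩ := measurable_pi_iff.2 fun _ ↦ measurable_pi_apply _
  exact (hindep.measure_inter_preimage_eq_mul S _ hS (hpull hS)).trans <| congrArg _ <|
    (measurePreserving_comp_infinitePi ν he).measure_preimage (hS.cylinder F).nullMeasurableSet

theorem infinitePi_eq_zero_or_one_of_comp_invariant {A : Set (ι → X)} (hA : MeasurableSet A)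
    (hinv : ∀ F : Finset ι, ∃ e : ι → ι, Function.Injective e ∧ (∀ i ∈ F, e i ∉ F) ∧
      (fun ω i ↦ ω (e i)) ⁻¹' A = A) :
    Measure.infinitePi (fun _ ↦ ν) A = 0 ∨ Measure.infinitePi (fun _ ↦ ν) A = 1 := by
  refine measure_eq_zero_or_one_of_approx hA fun ε hε ↦ ?_
  obtain ⟨C, hC, hCA⟩ := exists_measure_symmDiff_lt_of_generateFrom_isSetRing
    (μ := Measure.infinitePi fun _ : ι ↦ ν) isSetRing_measurableCylinders
    ⟨{Set.univ}, Set.countable_singleton _,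
      Set.singleton_subset_iff.2 (univ_mem_measurableCylinders _), by simp⟩
    generateFrom_measurableCylinders.symm hA (ENNReal.ofReal_pos.2 hε)
  have hCmeas := MeasurableSet.of_mem_measurableCylinders hC
  obtain ⟨F, S, hS, rfl⟩ := (mem_measurableCylinders _).1 hC
  obtain ⟨e, he, heF, heA⟩ := hinv F
  exact ⟨_, _, hCmeas, ENNReal.toReal_le_of_le_ofReal hε.le hCA.le,
    measurePreserving_comp_infinitePi ν he, heA, infinitePi_cylinder_inter_preimage ν he heF hS⟩

end ProductMeasure

/-! ### Bernoulli percolation -/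

section Bernoulli

variable {d : ℕ}

/-- The configuration in which the edges of `D` have been opened. -/
def openEdges (D : Finset (EdgeIx d)) (ω : Config d) : Config d := D.piecewise (fun _ ↦ true) ω

/-- Percolation laws for which the Burton–Keane argument works: translation invariant and ergodic,
and such that opening finitely many edges cannot turn an event of positive probability into a null
event. -/
structure IsErgodicInsertionTolerant (P : Measure (Config d)) : Prop where
  isProbabilityMeasure : IsProbabilityMeasure P
  measurePreserving_shift : ∀ x : V d, MeasurePreserving (shift x) P P
  measure_eq_zero_or_one : ∀ A : Set (Config d), MeasurableSet A →
    (∀ x : V d, shift x ⁻¹' A = A) → P A = 0 ∨ P A = 1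
  quasiMeasurePreserving_openEdges : ∀ D : Finset (EdgeIx d),
    Measure.QuasiMeasurePreserving (openEdges D) P P

variable {q : ℝ} {P : Measure (Config d)}

lemma IsBernoulli.eq_infinitePi (hP : IsBernoulli d q P) (hq : q ∈ unitInterval) :
    P = Measure.infinitePi fun _ ↦ bernoulliMeasure true false ⟨q, hq⟩ := by
  classical
  have := hP.1
  refine IsProjectiveLimit.unique (fun I ↦ ?_) (Measure.isProjectiveLimit_infinitePi _)
  refine Measure.ext_of_singleton fun g ↦ ?_
  let a : Config d := fun b ↦ if hb : b ∈ I then g ⟨b, hb⟩ else true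
  have ha : ∀ b : I, a b = g b := fun b ↦ dif_pos b.2
  have hpre : I.restrict ⁻¹' ({g} : Set (I → Bool)) = {ω : Config d | ∀ b ∈ I, ω b = a b} := by
    ext ω
    simp only [Set.mem_preimage, Set.mem_singleton_iff, funext_iff, Finset.restrict, ← ha,
      Subtype.forall, Set.mem_ofPred_eq]
  rw [Measure.map_apply (Finset.measurable_restrict I) (measurableSet_singleton g), hpre, hP.2,
    Measure.pi_singleton, ← Finset.prod_attach]
  refine Finset.prod_congr rfl fun b _ ↦ ?_
  rw [ha, bernoulliMeasure_apply _ (measurableSet_singleton _)]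
  have hq' : q.toNNReal = unitInterval.toNNReal ⟨q, hq⟩ := Real.toNNReal_of_nonneg hq.1
  have hq'' : (1 - q).toNNReal = unitInterval.toNNReal (unitInterval.symm ⟨q, hq⟩) :=
    Real.toNNReal_of_nonneg (sub_nonneg.2 hq.2)
  cases g b <;> simp [ENNReal.ofReal, hq', hq'']

theorem IsBernoulli.isErgodicInsertionTolerant (hP : IsBernoulli d q P) (hd : 0 < d) (h0 : 0 < q)
    (h1 : q ≤ 1) : IsErgodicInsertionTolerant P := by
  classical
  have hprob := hP.1
  set ν : Measure Bool := bernoulliMeasure true false ⟨q, h0.le, h1⟩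
  obtain rfl : P = Measure.infinitePi fun _ ↦ ν := hP.eq_infinitePi _
  have hinj : ∀ x : V d, Function.Injective fun b : EdgeIx d ↦ (b.1 + x, b.2) := fun x ↦
    (add_left_injective x).prodMap Function.injective_id
  refine ⟨hprob, fun x ↦ measurePreserving_comp_infinitePi ν (hinj x), fun A hA hinv ↦ ?_,
    fun D ↦ quasiMeasurePreserving_piecewise_infinitePi _ D fun _ _ ↦ ?_⟩
  · refine infinitePi_eq_zero_or_one_of_comp_invariant ν hA fun F ↦ ?_
    let i₀ : Fin d := ⟨0, hd⟩
    obtain ⟨N, hN⟩ := ((F ×ˢ F).image fun r ↦ r.2.1 i₀ - r.1.1 i₀).bddAbove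
    refine ⟨fun b ↦ (b.1 + fun _ ↦ N + 1, b.2), hinj _, fun b hb hb' ↦ ?_, hinv _⟩
    have hle := hN (Finset.mem_coe.2 (Finset.mem_image_of_mem _ (Finset.mk_mem_product hb hb')))
    simp only [Pi.add_apply] at hle
    lia
  · rw [bernoulliMeasure_apply _ (measurableSet_singleton _)]
    have hq : unitInterval.toNNReal ⟨q, h0.le, h1⟩ ≠ 0 := ne_of_gt h0
    simpa using hq

end Bernoulli

/-! ### Trifurcations in graphs -/

section Graph

variable {W : Type*} {G G' : SimpleGraph W} {B B' : Set W} {x y : W}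

/-- The connected component of `x` in `G`, as a set of vertices. -/
def cluster (G : SimpleGraph W) (x : W) : Set W := {y | G.Reachable x y}

/-- The graph `G` with the edges inside `B` deleted. -/
def outside (G : SimpleGraph W) (B : Set W) : SimpleGraph W where
  Adj x y := G.Adj x y ∧ ¬ (x ∈ B ∧ y ∈ B)
  symm.symm _ _ h := ⟨h.1.symm, fun h' ↦ h.2 h'.symm⟩
  loopless.irrefl x h := G.loopless.irrefl x h.1

lemma outside_le : outside G B ≤ G := fun _ _ h ↦ h.1

lemma outside_adj_of_notMem (h : G.Adj x y) (hx : x ∉ B) : (outside G B).Adj x y :=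
  ⟨h, fun h' ↦ hx h'.1⟩

lemma reachable_of_adj_imp (hadj : ∀ a b, G.Reachable x a → G.Adj a b → G'.Adj a b)
    (h : G.Reachable x y) : G'.Reachable x y := by
  rw [SimpleGraph.reachable_iff_reflTransGen] at h
  induction h with
  | refl => rfl
  | tail hxa hab ih =>
    rw [← SimpleGraph.reachable_iff_reflTransGen] at hxa
    exact ih.trans (hadj _ _ hxa hab).reachable

lemma reachable_outside_of_avoids (h : (outside G B).Reachable x y)
    (hB' : ∀ c ∈ B', ¬ (outside G B).Reachable x c) : (outside G B').Reachable x y :=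
  reachable_of_adj_imp (G := outside G B) (G' := outside G B')
    (fun a _ hxa hab ↦ outside_adj_of_notMem hab.1 fun ha ↦ hB' a ha hxa) h

lemma exists_mem_reachable_outside (h : G.Reachable x y) (hy : y ∈ B) :
    ∃ c ∈ B, (outside G B).Reachable x c := by
  rw [SimpleGraph.reachable_iff_reflTransGen] at h
  induction h using Relation.ReflTransGen.head_induction_on with
  | refl => exact ⟨y, hy, .refl y⟩
  | @head a b hab _ ih =>
    by_cases ha : a ∈ B
    · exact ⟨a, ha, .refl a⟩
    · obtain ⟨c, hc, hbc⟩ := ih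
      exact ⟨c, hc, (outside_adj_of_notMem hab ha).reachable.trans hbc⟩

lemma reachable_outside_of_preconnected (hB : (G.induce B).Preconnected) (hd : Disjoint B B')
    (hx : x ∈ B) (hy : y ∈ B) : (outside G B').Reachable x y :=
  (hB ⟨x, hx⟩ ⟨y, hy⟩).map (G' := outside G B') ⟨Subtype.val, fun {a _} hab ↦
    outside_adj_of_notMem hab (hd.notMem_of_mem_left a.2)⟩

lemma reachable_of_preconnected (hB : (G.induce B).Preconnected) (hx : x ∈ B) (hy : y ∈ B) :
    G.Reachable x y :=
  (reachable_outside_of_preconnected hB (Set.disjoint_empty B) hx hy).mono outside_le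

lemma exists_infinite_cluster_outside (hB : B.Finite) (hx : x ∈ B)
    (hinf : (cluster G x).Infinite) :
    ∃ a ∈ B, G.Reachable x a ∧ (cluster (outside G B) a).Infinite := by
  by_contra! hfin
  refine hinf (((hB.sep (G.Reachable x)).biUnion
    fun a ha ↦ hfin a ha.1 ha.2).subset fun y hxy ↦ ?_)
  obtain ⟨c, hc, hyc⟩ := exists_mem_reachable_outside (SimpleGraph.Reachable.symm hxy) hx
  exact Set.mem_biUnion ⟨hc, SimpleGraph.Reachable.trans hxy (hyc.mono outside_le)⟩ hyc.symm

lemma reachable_of_infinite_of_merge (hle : G ≤ G') (hout : outside G' B = outside G B)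
    (hB : (G'.induce B).Preconnected) {u : W}
    (hthree : ∀ x y z, (cluster G x).Infinite → (cluster G y).Infinite → (cluster G z).Infinite →
      G.Reachable x y ∨ G.Reachable x z ∨ G.Reachable y z)
    (hxB : x ∈ B) (hyB : y ∈ B) (hx : (cluster G x).Infinite) (hy : (cluster G y).Infinite)
    (hxy : ¬ G.Reachable x y) (hu : (cluster G' u).Infinite) : G'.Reachable u x := by
  by_contra hux
  have havoid (c) (huc : G'.Reachable u c) : c ∉ B :=
    fun hc ↦ hux (huc.trans (reachable_of_preconnected hB hc hxB))
  have hsub : cluster G' u ⊆ cluster G u := fun v ↦ reachable_of_adj_imp fun a b hua hab ↦ by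
    have hab' : (outside G' B).Adj a b := outside_adj_of_notMem hab (havoid a hua)
    exact outside_le (hout ▸ hab')
  rcases hthree x y u hx hy (hu.mono hsub) with h | h | h
  · exact hxy h
  · exact hux (h.mono hle).symm
  · exact havoid y (h.mono hle).symm hyB

/-- The set `B` is connected inside `G`, and it contains the roots `a i` of three branches which
are separated from each other once the edges inside `B` are deleted. -/
structure IsBranching (G : SimpleGraph W) (B : Set W) (a : Fin 3 → W) : Prop where
  preconnected : (G.induce B).Preconnected
  mem : ∀ i, a i ∈ B
  separated : Pairwise fun i j ↦ ¬ (outside G B).Reachable (a i) (a j)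

/-- A trifurcation in the sense of Burton and Keane, with a set `B` of vertices in place of a
single vertex: `B` joins three infinite branches which are separated from each other outside. -/
def IsTrifurcation (G : SimpleGraph W) (B : Set W) : Prop :=
  ∃ a, IsBranching G B a ∧ ∀ i, (cluster (outside G B) (a i)).Infinite

lemma IsTrifurcation.of_outside_eq (hfin : B.Finite) (hB : (G'.induce B).Preconnected)
    (hout : outside G' B = outside G B) {x : Fin 3 → W} (hx : ∀ i, x i ∈ B)
    (hinf : ∀ i, (cluster G (x i)).Infinite)
    (hsep : Pairwise fun i j ↦ ¬ G.Reachable (x i) (x j)) : IsTrifurcation G' B := by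
  choose a haB hxa hainf using fun i ↦ exists_infinite_cluster_outside hfin (hx i) (hinf i)
  refine ⟨a, ⟨hB, haB, fun i j hij h ↦ hsep hij ?_⟩, by rwa [hout]⟩
  rw [hout] at h
  exact (hxa i).trans ((h.mono outside_le).trans (hxa j).symm)

lemma IsTrifurcation.of_comap {W' : Type*} (f : W' ≃ W)
    (h : IsTrifurcation (G.comap f) (f ⁻¹' B)) : IsTrifurcation G B := by
  obtain ⟨a, ⟨hB, haB, hsep⟩, hinf⟩ := h
  let F : outside (G.comap f) (f ⁻¹' B) ≃g outside G B := ⟨f, .rfl⟩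
  refine ⟨f ∘ a, ⟨?_, haB, fun i j hij hr ↦ hsep hij (F.reachable_iff.1 hr)⟩,
    fun i hfin ↦ hinf i ?_⟩
  · rintro ⟨x, hx⟩ ⟨y, hy⟩
    obtain ⟨x, rfl⟩ := f.surjective x
    obtain ⟨y, rfl⟩ := f.surjective y
    exact (hB ⟨x, hx⟩ ⟨y, hy⟩).map (G' := G.induce B)
      ⟨fun w : (f ⁻¹' B : Set W') ↦ (⟨f w, w.2⟩ : B), fun {_ _} h ↦ h⟩
  · exact (hfin.preimage f.injective.injOn).subset fun y hy ↦ F.reachable_iff.2 hy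

section Count

variable {ι : Type*} {B : ι → Set W} {S : Finset ι}

/-- A pair `(t, b)` from which the largest collection of sets `B s` can be visited without using
the edges inside `B t`: leaving `B t` on another branch leads to no further set. -/
lemma exists_dead_end (hS : S.Nonempty) (hne : ∀ t ∈ S, (B t).Nonempty)
    (hdisj : (S : Set ι).PairwiseDisjoint B) (hconn : ∀ t ∈ S, (G.induce (B t)).Preconnected) :
    ∃ t ∈ S, ∃ b, ∀ b' ∈ B t, ¬ (outside G (B t)).Reachable b b' →
      ∀ s ∈ S, s ≠ t → ∀ c ∈ B s, ¬ (outside G (B t)).Reachable b' c := by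
  let visited (t : ι) (b : W) : Set ι :=
    {s | s ∈ S ∧ s ≠ t ∧ ∃ c ∈ B s, (outside G (B t)).Reachable b c}
  have hfinite : {A | ∃ t ∈ S, ∃ b ∈ B t, visited t b = A}.Finite := by
    refine S.finite_toSet.powerset.subset ?_
    rintro _ ⟨t, _, b, _, rfl⟩ s hs
    exact hs.1
  obtain ⟨t₀, ht₀⟩ := hS
  obtain ⟨b₀, hb₀⟩ := hne t₀ ht₀
  obtain ⟨_, ⟨t, ht, b, hb, rfl⟩, hmax⟩ := hfinite.exists_maximal ⟨_, t₀, ht₀, b₀, hb₀, rfl⟩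
  refine ⟨t, ht, b, fun b' hb' hbb' s hs hst c hc hb'c ↦ ?_⟩
  have hbs (z) (hz : z ∈ B s) : ¬ (outside G (B t)).Reachable b z := fun hbz ↦
    hbb' (hbz.trans ((reachable_outside_of_preconnected (hconn s hs) (hdisj hs ht hst) hz hc).trans
      hb'c.symm))
  obtain ⟨c', hc', hb'c'⟩ := exists_mem_reachable_outside (hb'c.mono outside_le) hc
  have hc'b : (outside G (B s)).Reachable c' b := hb'c'.symm.trans
    (reachable_outside_of_preconnected (hconn t ht) (hdisj ht hs hst.symm) hb' hb)
  have hle : visited t b ⊆ visited s c' := by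
    rintro r ⟨hr, _, z, hz, hbz⟩
    refine ⟨hr, ?_, z, hz, hc'b.trans (reachable_outside_of_avoids hbz hbs)⟩
    rintro rfl
    exact hbs z hz hbz
  have htt : t ∈ visited t b :=
    hmax ⟨s, hs, c', hc', rfl⟩ hle ⟨ht, hst.symm, b, hb, hc'b⟩
  exact htt.2.1 rfl

lemma IsBranching.exists_ne_not_reachable {B : Set W} {a : Fin 3 → W} (h : IsBranching G B a)
    (b : W) : ∃ i j, i ≠ j ∧ ¬ (outside G B).Reachable b (a i) ∧
      ¬ (outside G B).Reachable b (a j) := by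
  obtain ⟨k, hk⟩ : ∃ k, ∀ i, i ≠ k → ¬ (outside G B).Reachable b (a i) := by
    by_cases hb : ∃ k, (outside G B).Reachable b (a k)
    · obtain ⟨k, hk⟩ := hb
      exact ⟨k, fun i hi hbi ↦ h.separated hi (hbi.symm.trans hk)⟩
    · exact ⟨0, fun i _ hi ↦ hb ⟨i, hi⟩⟩
  exact ⟨k + 1, k + 2, by simp, hk _ (by simp), hk _ (by simp)⟩

theorem card_le_card_of_isBranching {a : ι → Fin 3 → W} {Y : Finset W}
    (hdisj : (S : Set ι).PairwiseDisjoint B) (hbr : ∀ t ∈ S, IsBranching G (B t) (a t))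
    (hY : ∀ t ∈ S, ∀ i, ∃ y ∈ Y, (outside G (B t)).Reachable (a t i) y) : S.card ≤ Y.card := by
  classical
  induction hn : S.card generalizing S Y with
  | zero => exact Nat.zero_le _
  | succ n ih =>
    obtain ⟨t, ht, b, hdead⟩ := exists_dead_end (Finset.card_pos.1 (hn ▸ n.succ_pos))
      (fun s hs ↦ ⟨_, (hbr s hs).mem 0⟩) hdisj fun s hs ↦ (hbr s hs).preconnected
    obtain ⟨i, j, hij, hbi, hbj⟩ := (hbr t ht).exists_ne_not_reachable b
    obtain ⟨y, hy, hiy⟩ := hY t ht i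
    obtain ⟨y', hy', hjy'⟩ := hY t ht j
    have avoid {k} (hk : ¬ (outside G (B t)).Reachable b (a t k)) {z}
        (hz : (outside G (B t)).Reachable (a t k) z) {s} (hs : s ∈ S) (hst : s ≠ t) :
        (outside G (B s)).Reachable (a t k) z :=
      reachable_outside_of_avoids hz (hdead _ ((hbr t ht).mem k) hk s hs hst)
    let Y' := {z ∈ Y | ¬ (outside G (B t)).Reachable (a t i) z}
    have hlt : Y'.card < Y.card := Finset.card_lt_card (Finset.filter_ssubset.2 ⟨y, hy, by simpa⟩)
    suffices n ≤ Y'.card by lia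
    refine ih (hdisj.subset (Finset.coe_subset.2 (S.erase_subset t)))
      (fun s hs ↦ hbr s (Finset.mem_of_mem_erase hs)) (fun s hs k ↦ ?_)
      (by rw [Finset.card_erase_of_mem ht, hn, Nat.add_sub_cancel])
    obtain ⟨hst, hs⟩ := Finset.mem_erase.1 hs
    obtain ⟨z, hz, hkz⟩ := hY s hs k
    by_cases hiz : (outside G (B t)).Reachable (a t i) z
    · have hij' : (outside G (B s)).Reachable (a t i) (a t j) :=
        reachable_outside_of_preconnected (hbr t ht).preconnected (hdisj ht hs hst.symm)
          ((hbr t ht).mem i) ((hbr t ht).mem j)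
      exact ⟨y', Finset.mem_filter.2
          ⟨hy', fun h ↦ (hbr t ht).separated hij (h.trans hjy'.symm)⟩,
        hkz.trans ((avoid hbi hiz hs hst).symm.trans (hij'.trans (avoid hbj hjy' hs hst)))⟩
    · exact ⟨z, Finset.mem_filter.2 ⟨hz, hiz⟩, hkz⟩

end Count

section Measurability

variable {α : Type*} [MeasurableSpace α] [Countable W] {G : α → SimpleGraph W}

lemma measurable_reachable (hG : ∀ x y, Measurable fun ω ↦ (G ω).Adj x y) (x y : W) :
    Measurable fun ω ↦ (G ω).Reachable x y := by
  have hwalk (n : ℕ) (x : W) : Measurable fun ω ↦ ∃ w : (G ω).Walk x y, w.length = n := by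
    induction n generalizing x with
    | zero =>
      convert measurable_const (a := x = y) using 2
      rw [SimpleGraph.Walk.exists_length_eq_zero_iff]
    | succ n ih =>
      have hsucc (ω : α) : (∃ w : (G ω).Walk x y, w.length = n + 1) ↔
          ∃ z, (G ω).Adj x z ∧ ∃ w : (G ω).Walk z y, w.length = n := by
        refine ⟨?_, fun ⟨z, hxz, w, hw⟩ ↦ ⟨.cons hxz w, by simp [hw]⟩⟩
        rintro ⟨_ | ⟨hxz, w⟩, hw⟩
        · simp at hw
        · exact ⟨_, hxz, w, by simpa using hw⟩
      simp only [hsucc]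
      exact .exists fun z ↦ (hG x z).and (ih z)
  have hiff (ω : α) : (G ω).Reachable x y ↔ ∃ n, ∃ w : (G ω).Walk x y, w.length = n :=
    ⟨fun ⟨w⟩ ↦ ⟨_, w, rfl⟩, fun ⟨_, w, _⟩ ↦ ⟨w⟩⟩
  simp only [hiff]
  exact .exists fun n ↦ hwalk n x

lemma measurable_infinite_cluster (hG : ∀ x y, Measurable fun ω ↦ (G ω).Adj x y) (x : W) :
    Measurable fun ω ↦ (cluster (G ω) x).Infinite := by
  have hiff (ω : α) : (cluster (G ω) x).Infinite ↔
      ∀ F : Finset W, ∃ y, y ∉ F ∧ (G ω).Reachable x y :=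
    ⟨fun h F ↦ (h.exists_notMem_finset F).imp fun _ hy ↦ hy.symm, fun h hfin ↦
      (h hfin.toFinset).elim fun _ hy ↦ hy.1 (hfin.mem_toFinset.2 hy.2)⟩
  simp only [hiff]
  exact .forall fun F ↦ .exists fun y ↦ measurable_const.and (measurable_reachable hG x y)

lemma measurable_isTrifurcation (hG : ∀ x y, Measurable fun ω ↦ (G ω).Adj x y) (B : Set W) :
    Measurable fun ω ↦ IsTrifurcation (G ω) B := by
  have hout (x y : W) : Measurable fun ω ↦ (outside (G ω) B).Adj x y :=
    (hG x y).and measurable_const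
  have hiff (ω : α) : IsTrifurcation (G ω) B ↔ ∃ a : Fin 3 → W,
      ((∀ x y, ((G ω).induce B).Reachable x y) ∧ (∀ i, a i ∈ B) ∧
        ∀ i j, i ≠ j → ¬ (outside (G ω) B).Reachable (a i) (a j)) ∧
      ∀ i, (cluster (outside (G ω) B) (a i)).Infinite :=
    exists_congr fun a ↦ and_congr_left' ⟨fun h ↦ ⟨h.1, h.2, h.3⟩, fun h ↦ ⟨h.1, h.2.1, h.2.2⟩⟩
  simp only [hiff]
  refine .exists fun a ↦ .and (.and (.forall fun x ↦ .forall fun y ↦ ?_) (measurable_const.and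
    (.forall fun i ↦ .forall fun j ↦ measurable_const.imp (measurable_reachable hout _ _).not)))
    (.forall fun i ↦ measurable_infinite_cluster hout _)
  exact measurable_reachable (fun x y ↦ hG x.1 y.1) x y

end Measurability

end Graph

/-! ### The graph of open edges -/

section OpenGraph

variable {d : ℕ} {ω : Config d} {x y e : V d}

lemma unitVec_eq_single (i : Fin d) : unitVec d i = Pi.single i 1 := by
  ext j
  rw [unitVec, Pi.single_apply]

lemma mem_Ud : e ∈ Ud d ↔ ∃ i, e = unitVec d i ∨ e = -unitVec d i := by
  simp only [Ud, Finset.mem_union, Finset.mem_image, Finset.mem_univ, true_and, exists_or, eq_comm]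

lemma mem_Ud_of_edgeOpen (h : edgeOpen ω x e) : e ∈ Ud d :=
  mem_Ud.2 (h.imp fun _ ↦ Or.imp And.left And.left)

lemma edgeOpen_sub_iff : edgeOpen ω x (y - x) ↔
    ∃ i, (y = x + unitVec d i ∧ ω (x, i) = true) ∨ (x = y + unitVec d i ∧ ω (y, i) = true) := by
  refine exists_congr fun i ↦ or_congr (by rw [sub_eq_iff_eq_add']) ?_
  rw [← neg_sub, neg_inj, sub_eq_iff_eq_add']
  exact and_congr_right fun h ↦ by rw [h, add_sub_cancel_right]

/-- The subgraph of the lattice formed by the open edges of `ω`. -/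
def openGraph (ω : Config d) : SimpleGraph (V d) where
  Adj x y := edgeOpen ω x (y - x)
  symm.symm _ _ h := by
    rw [edgeOpen_sub_iff] at h ⊢
    exact h.imp fun _ ↦ Or.symm
  loopless.irrefl x h := by
    obtain ⟨i, ⟨h, _⟩ | ⟨h, _⟩⟩ := edgeOpen_sub_iff.1 h <;>
    · rw [unitVec_eq_single, left_eq_add, Pi.single_eq_zero_iff] at h
      exact one_ne_zero h

lemma openGraph_adj : (openGraph ω).Adj x y ↔
    ∃ i, (y = x + unitVec d i ∧ ω (x, i) = true) ∨ (x = y + unitVec d i ∧ ω (y, i) = true) :=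
  edgeOpen_sub_iff

lemma shift_shift (x y : V d) (ω : Config d) : shift x (shift y ω) = shift (x + y) ω := by
  ext b
  simp only [shift, add_assoc]

lemma shift_zero (ω : Config d) : shift 0 ω = ω := by
  ext b
  simp only [shift, add_zero]

lemma measurable_shift (x : V d) : Measurable (shift x) :=
  measurable_pi_iff.2 fun _ ↦ measurable_pi_apply _

lemma edgeOpen_shift (z x e : V d) : edgeOpen (shift z ω) x e ↔ edgeOpen ω (x + z) e := by
  simp only [edgeOpen, shift, add_sub_right_comm]

lemma openGraph_shift (z : V d) (ω : Config d) :
    openGraph (shift z ω) = (openGraph ω).comap (Equiv.addRight z) := by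
  ext x y
  rw [SimpleGraph.comap_adj]
  change edgeOpen _ _ _ ↔ edgeOpen _ _ _
  rw [edgeOpen_shift, Equiv.coe_addRight, add_sub_add_right_eq_sub]

lemma reachable_openGraph_shift (z : V d) :
    (openGraph (shift z ω)).Reachable x y ↔ (openGraph ω).Reachable (x + z) (y + z) := by
  rw [openGraph_shift, ← (SimpleGraph.Iso.comap (Equiv.addRight z) (openGraph ω)).reachable_iff]
  rfl

lemma infinite_cluster_openGraph_shift (z : V d) :
    (cluster (openGraph (shift z ω)) x).Infinite ↔ (cluster (openGraph ω) (x + z)).Infinite := by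
  have hpre : cluster (openGraph (shift z ω)) x =
      Equiv.addRight z ⁻¹' cluster (openGraph ω) (x + z) :=
    Set.ext fun _ ↦ reachable_openGraph_shift z
  rw [hpre]
  exact ⟨fun h hfin ↦ h (hfin.preimage (Equiv.addRight z).injective.injOn),
    fun h ↦ h.preimage fun y _ ↦ (Equiv.addRight z).surjective y⟩

lemma exists_isOpenPath_iff_reachable :
    (∃ γ n, γ 0 = x ∧ IsOpenPath ω γ n ∧ γ n = y) ↔ (openGraph ω).Reachable x y := by
  constructor
  · rintro ⟨γ, n, rfl, hγ, rfl⟩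
    induction n with
    | zero => rfl
    | succ n ih =>
      exact (ih fun k hk ↦ hγ k (hk.trans n.lt_succ_self)).trans
        (SimpleGraph.Adj.reachable (hγ n n.lt_succ_self).2)
  · rintro ⟨w⟩
    refine ⟨w.getVert, w.length, w.getVert_zero, fun k hk ↦ ?_, w.getVert_length⟩
    have h : edgeOpen ω _ _ := w.adj_getVert_succ hk
    exact ⟨mem_Ud_of_edgeOpen h, h⟩

/-- The cube of side length `2 * L + 1` centred at `z`. -/
def box (L : ℕ) (z : V d) : Set (V d) := Set.Icc (z - L) (z + L)

lemma mem_box {L : ℕ} {z : V d} : y ∈ box L z ↔ ∀ i, |y i - z i| ≤ L := by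
  simp only [box, Set.mem_Icc, Pi.le_def, ← forall_and]
  refine forall_congr' fun i ↦ ?_
  simp only [Pi.sub_apply, Pi.add_apply, Pi.natCast_apply, abs_le]
  lia

lemma finite_box (L : ℕ) (z : V d) : (box L z).Finite := Set.finite_Icc _ _

lemma exists_subset_box {s : Set (V d)} (hs : s.Finite) : ∃ L : ℕ, s ⊆ box L 0 := by
  obtain ⟨L, hL⟩ := (hs.image fun y : V d ↦ ∑ i, (y i).natAbs).bddAbove
  refine ⟨L, fun y hy ↦ mem_box.2 fun i ↦ ?_⟩
  have hle := (Finset.single_le_sum (f := fun i ↦ (y i).natAbs) (fun _ _ ↦ Nat.zero_le _)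
    (Finset.mem_univ i)).trans (hL (Set.mem_image_of_mem _ hy))
  rw [Pi.zero_apply, sub_zero, ← Int.natCast_natAbs]
  exact_mod_cast hle

lemma memCluster_iff : memCluster ω x ↔ (cluster (openGraph ω) x).Infinite := by
  have hbox (R : ℕ) : (∃ (γ : ℕ → V d) (n : ℕ), γ 0 = x ∧ IsOpenPath ω γ n ∧ ¬ inBox (γ n) R) ↔
      ¬ cluster (openGraph ω) x ⊆ box R 0 := by
    have hin (y : V d) : inBox y R ↔ y ∈ box R 0 := by
      rw [mem_box]
      exact forall_congr' fun i ↦ by rw [Pi.zero_apply, sub_zero]; exact_mod_cast Iff.rfl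
    rw [Set.not_subset]
    constructor
    · rintro ⟨γ, n, h0, hγ, hR⟩
      exact ⟨γ n, exists_isOpenPath_iff_reachable.1 ⟨γ, n, h0, hγ, rfl⟩, (hin _).not.1 hR⟩
    · rintro ⟨y, hxy, hR⟩
      obtain ⟨γ, n, h0, hγ, rfl⟩ := exists_isOpenPath_iff_reachable.2 hxy
      exact ⟨γ, n, h0, hγ, (hin _).not.2 hR⟩
  refine (forall_congr' hbox).trans ⟨fun h hfin ↦ ?_, fun h R hR ↦ h ((finite_box R 0).subset hR)⟩
  obtain ⟨L, hL⟩ := exists_subset_box hfin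
  exact h L hL

lemma mem_cluZero : ω ∈ cluZero d ↔ (cluster (openGraph ω) 0).Infinite := memCluster_iff

lemma shift_mem_cluZero_iff : shift x ω ∈ cluZero d ↔ (cluster (openGraph ω) x).Infinite := by
  rw [mem_cluZero, infinite_cluster_openGraph_shift, zero_add]

lemma measurable_edgeOpen (x e : V d) : Measurable fun ω : Config d ↦ edgeOpen ω x e := by
  have hb (b : EdgeIx d) : Measurable fun ω : Config d ↦ ω b = true :=
    (measurableSet_singleton true).mem.comp (measurable_pi_apply b)
  exact .exists fun i ↦ (measurable_const.and (hb _)).or (measurable_const.and (hb _))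

lemma measurable_openGraph_adj (x y : V d) : Measurable fun ω ↦ (openGraph ω).Adj x y :=
  measurable_edgeOpen x (y - x)

lemma measurableSet_cluZero : MeasurableSet (cluZero d) := by
  simp only [cluZero, memCluster_iff]
  exact measurableSet_setOfPred.2 (measurable_infinite_cluster measurable_openGraph_adj 0)

end OpenGraph

/-! ### The density of trifurcations -/

lemma sum_measure_le_of_card_le {α ι : Type*} [MeasurableSpace α] {μ : Measure α}
    [IsProbabilityMeasure μ] [Fintype ι] {p : ι → α → Prop} [∀ i x, Decidable (p i x)]
    (hp : ∀ i, Measurable (p i)) {C : ℕ}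
    (hC : ∀ x, ({i | p i x} : Finset ι).card ≤ C) : ∑ i, μ {x | p i x} ≤ C := by
  calc ∑ i, μ {x | p i x} = ∑ i, ∫⁻ x, {x | p i x}.indicator 1 x ∂μ :=
        Finset.sum_congr rfl fun i _ ↦
          (lintegral_indicator_one (measurableSet_setOfPred.2 (hp i))).symm
    _ = ∫⁻ x, ∑ i, {x | p i x}.indicator 1 x ∂μ :=
        (lintegral_finsetSum _ fun i _ ↦
          measurable_one.indicator (measurableSet_setOfPred.2 (hp i))).symm
    _ ≤ ∫⁻ _, C ∂μ := lintegral_mono fun x ↦ by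
        simpa [Set.indicator_apply, Finset.sum_boole] using hC x
    _ = C := by simp

section Trifurcation

variable {d : ℕ} {ω : Config d} {G : SimpleGraph (V d)} {a b x y : V d}

lemma preconnected_induce_Icc (hadj : ∀ x i, x ∈ Set.Icc a b → x + unitVec d i ∈ Set.Icc a b →
    G.Adj x (x + unitVec d i)) : (G.induce (Set.Icc a b)).Preconnected := by
  suffices hroot : ∀ x (hx : x ∈ Set.Icc a b), (G.induce (Set.Icc a b)).Reachable
      ⟨a, Set.left_mem_Icc.2 (hx.1.trans hx.2)⟩ ⟨x, hx⟩ from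
    fun x y ↦ (hroot x x.2).symm.trans (hroot y y.2)
  rintro x ⟨hax, hxb⟩
  have hchain := le_iff_reflTransGen_covBy.1 hax
  induction hchain with
  | refl => rfl
  | @tail y z hay hyz ih =>
    have hy : y ∈ Set.Icc a b := ⟨le_iff_reflTransGen_covBy.2 hay, hyz.le.trans hxb⟩
    refine (ih hy.1 hy.2).trans (SimpleGraph.Adj.reachable ?_)
    obtain ⟨i, v, hv, rfl⟩ := Pi.covBy_iff_exists_right_eq.1 hyz
    rw [Order.covBy_iff_add_one_eq] at hv
    have hstep : Function.update y i v = y + unitVec d i := by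
      rw [unitVec_eq_single, ← hv]
      ext j
      rcases eq_or_ne j i with rfl | hji <;> simp [*]
    simp only [SimpleGraph.comap_adj, Function.Embedding.subtype_apply, hstep] at hax hxb ⊢
    exact hadj y i hy ⟨hax, hxb⟩

lemma exists_reachable_mem_shell (hG : ∀ x y, G.Adj x y → ∀ i, |x i - y i| ≤ 1)
    (hx : x ∈ Set.Icc a b) (hinf : (cluster G x).Infinite) :
    ∃ y ∈ Finset.Icc (a - 1) (b + 1) \ Finset.Icc a b, G.Reachable x y := by
  obtain ⟨y, hxy, hy⟩ := hinf.exists_notMem_finite (Set.finite_Icc a b)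
  change G.Reachable x y at hxy
  rw [SimpleGraph.reachable_iff_reflTransGen] at hxy
  clear hinf
  induction hxy using Relation.ReflTransGen.head_induction_on with
  | refl => exact absurd hx hy
  | @head x c hxc _ ih =>
    by_cases hc : c ∈ Set.Icc a b
    · obtain ⟨z, hz, hcz⟩ := ih hc
      exact ⟨z, hz, hxc.reachable.trans hcz⟩
    · refine ⟨c, Finset.mem_sdiff.2 ⟨Finset.mem_Icc.2 ⟨fun i ↦ ?_, fun i ↦ ?_⟩, ?_⟩, hxc.reachable⟩
      · have := abs_le.1 (hG x c hxc i)
        have := hx.1 i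
        simp only [Pi.sub_apply, Pi.one_apply]
        lia
      · have := abs_le.1 (hG x c hxc i)
        have := hx.2 i
        simp only [Pi.add_apply, Pi.one_apply]
        lia
      · simpa using hc

lemma abs_sub_le_one_of_openGraph_adj (h : (openGraph ω).Adj x y) (i : Fin d) :
    |x i - y i| ≤ 1 := by
  obtain ⟨j, ⟨rfl, _⟩ | ⟨rfl, _⟩⟩ := openGraph_adj.1 h <;>
  · by_cases hij : i = j <;> simp [unitVec, hij]

/-- The points of the grid of mesh `2 * L + 1`; the boxes `box L (gridPt L n k)` tile a cube. -/
def gridPt (L n : ℕ) (k : Fin d → Fin n) : V d := fun i ↦ (2 * L + 1) * (k i : ℤ)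

lemma pairwise_disjoint_box_gridPt (L n : ℕ) :
    Pairwise (Function.onFun Disjoint fun k : Fin d → Fin n ↦ box L (gridPt L n k)) := by
  intro k k' hkk'
  refine Set.disjoint_left.2 fun y hy hy' ↦ hkk' (funext fun i ↦ Fin.ext ?_)
  have h := abs_le.1 (mem_box.1 hy i)
  have h' := abs_le.1 (mem_box.1 hy' i)
  simp only [gridPt] at h h'
  have hlt : ((k i : ℕ) : ℤ) < k' i + 1 := by nlinarith
  have hlt' : ((k' i : ℕ) : ℤ) < k i + 1 := by nlinarith
  lia

lemma box_gridPt_subset (L n : ℕ) (k : Fin d → Fin n) : box L (gridPt L n k) ⊆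
    Set.Icc (fun _ ↦ -(L : ℤ)) (fun _ ↦ (2 * L + 1) * n - L - 1) := by
  intro y hy
  refine ⟨fun i ↦ ?_, fun i ↦ ?_⟩ <;>
  · have h := abs_le.1 (mem_box.1 hy i)
    have hk : ((k i : ℕ) : ℤ) + 1 ≤ n := by exact_mod_cast (k i).2
    simp only [gridPt] at h ⊢
    nlinarith

open Classical in
lemma card_isTrifurcation_add_pow_le (hG : ∀ x y, G.Adj x y → ∀ i, |x i - y i| ≤ 1) (L n : ℕ) :
    ({k | IsTrifurcation G (box L (gridPt L n k))} : Finset (Fin d → Fin n)).card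
      + ((2 * L + 1) * n) ^ d ≤ ((2 * L + 1) * n + 2) ^ d := by
  let lo : V d := fun _ ↦ -(L : ℤ)
  let hi : V d := fun _ ↦ (2 * L + 1) * n - L - 1
  have hsub : Finset.Icc lo hi ⊆ Finset.Icc (lo - 1) (hi + 1) :=
    Finset.Icc_subset_Icc (by simp) (by simp)
  have hcard : (Finset.Icc lo hi).card = ((2 * L + 1) * n) ^ d := by
    simp only [Pi.card_Icc, lo, hi, Int.card_Icc, Finset.prod_const, Finset.card_univ,
      Fintype.card_fin]
    congr 1
    lia
  have hcard' : (Finset.Icc (lo - 1) (hi + 1)).card = ((2 * L + 1) * n + 2) ^ d := by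
    simp only [Pi.card_Icc, lo, hi, Pi.sub_apply, Pi.add_apply, Pi.one_apply, Int.card_Icc,
      Finset.prod_const, Finset.card_univ, Fintype.card_fin]
    congr 1
    lia
  rw [← hcard, ← hcard', ← Finset.card_sdiff_add_card_eq_card hsub]
  refine Nat.add_le_add_right ?_ _
  choose! r hr hrinf using
    fun (k : Fin d → Fin n) (hk : IsTrifurcation G (box L (gridPt L n k))) ↦ hk
  refine card_le_card_of_isBranching (G := G) (a := r)
    ((pairwise_disjoint_box_gridPt L n).set_pairwise _)
    (fun k hk ↦ hr k (Finset.mem_filter.1 hk).2) fun k hk i ↦ ?_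
  have hk' := (Finset.mem_filter.1 hk).2
  exact exists_reachable_mem_shell (fun x y h ↦ hG x y (outside_le h))
    (box_gridPt_subset L n k ((hr k hk').mem i)) (hrinf k hk' i)

lemma IsErgodicInsertionTolerant.measure_isTrifurcation_le {P : Measure (Config d)}
    (hP : IsErgodicInsertionTolerant P) (L : ℕ) (z : V d) :
    P {ω | IsTrifurcation (openGraph ω) (box L 0)} ≤
      P {ω | IsTrifurcation (openGraph ω) (box L z)} := by
  rw [← (hP.measurePreserving_shift z).measure_preimage
    (measurableSet_setOfPred.2
      (measurable_isTrifurcation measurable_openGraph_adj _)).nullMeasurableSet]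
  refine measure_mono fun ω hω ↦ IsTrifurcation.of_comap (Equiv.addRight z) ?_
  have hbox : Equiv.addRight z ⁻¹' box L z = box L 0 := by
    ext y
    simp [mem_box]
  rwa [hbox, ← openGraph_shift]

theorem IsErgodicInsertionTolerant.ae_not_isTrifurcation {P : Measure (Config d)}
    (hP : IsErgodicInsertionTolerant P) (L : ℕ) :
    ∀ᵐ ω ∂P, ¬ IsTrifurcation (openGraph ω) (box L 0) := by
  classical
  have := hP.isProbabilityMeasure
  set t := P {ω | IsTrifurcation (openGraph ω) (box L 0)}
  have hcount (n : ℕ) : n ^ d * t ≤ (((2 * L + 1) * n + 2) ^ d - ((2 * L + 1) * n) ^ d : ℕ) := by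
    calc n ^ d * t = ∑ _ : Fin d → Fin n, t := by simp
      _ ≤ ∑ k : Fin d → Fin n, P {ω | IsTrifurcation (openGraph ω) (box L (gridPt L n k))} :=
          Finset.sum_le_sum fun k _ ↦ hP.measure_isTrifurcation_le L (gridPt L n k)
      _ ≤ _ := sum_measure_le_of_card_le
          (fun k ↦ measurable_isTrifurcation measurable_openGraph_adj _) fun ω ↦
            Nat.le_sub_of_add_le (card_isTrifurcation_add_pow_le
              (fun _ _ ↦ abs_sub_le_one_of_openGraph_adj) L n)
  have hdensity (n : ℕ) (hn : n ≠ 0) :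
      t.toReal ≤ (2 * L + 1 + 2 / n : ℝ) ^ d - (2 * L + 1 : ℝ) ^ d := by
    have hn' : (0 : ℝ) < n := by positivity
    have h := ENNReal.toReal_mono (ENNReal.natCast_ne_top _) (hcount n)
    rw [ENNReal.toReal_natCast, Nat.cast_sub (Nat.pow_le_pow_left (Nat.le_add_right _ _) d)] at h
    push_cast [ENNReal.toReal_mul, ENNReal.toReal_pow, ENNReal.toReal_natCast] at h
    rwa [← mul_le_mul_iff_right₀ (pow_pos hn' d), mul_sub, ← mul_pow, ← mul_pow, mul_add,
      mul_div_cancel₀ _ hn'.ne', mul_comm (n : ℝ)]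
  have hlim : Tendsto (fun n : ℕ ↦ (2 * L + 1 + 2 / n : ℝ) ^ d - (2 * L + 1 : ℝ) ^ d) atTop
      (𝓝 ((2 * L + 1 + 0) ^ d - (2 * L + 1) ^ d)) :=
    ((tendsto_const_nhds.add (tendsto_const_div_atTop_nhds_zero_nat 2)).pow d).sub_const _
  rw [add_zero, sub_self] at hlim
  have ht : t.toReal ≤ 0 :=
    ge_of_tendsto hlim ((eventually_ne_atTop 0).mono hdensity)
  have ht0 : t = 0 := ((ENNReal.toReal_eq_zero_iff t).1
    (ht.antisymm ENNReal.toReal_nonneg)).resolve_right (measure_ne_top P _)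
  simpa only [ae_iff, not_not] using ht0

end Trifurcation

/-! ### Uniqueness of the infinite cluster -/

section Uniqueness

variable {d : ℕ} {P : Measure (Config d)}

open Classical in
/-- The edges with both endpoints in the box `box L 0`. -/
def boxEdges (L : ℕ) : Finset (EdgeIx d) :=
  {b ∈ (finite_box L 0).toFinset ×ˢ Finset.univ | b.1 + unitVec d b.2 ∈ box L 0}

lemma mem_boxEdges {L : ℕ} {x : V d} {i : Fin d} :
    (x, i) ∈ boxEdges L ↔ x ∈ box L 0 ∧ x + unitVec d i ∈ box L 0 := by
  simp [boxEdges]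

lemma openEdges_eq_true_iff {D : Finset (EdgeIx d)} {ω : Config d} {b : EdgeIx d} :
    openEdges D ω b = true ↔ b ∈ D ∨ ω b = true := by
  rw [openEdges, Finset.piecewise]
  split_ifs with h <;> simp [h]

lemma openGraph_le_openEdges (D : Finset (EdgeIx d)) (ω : Config d) :
    openGraph ω ≤ openGraph (openEdges D ω) := fun _ _ h ↦
  openGraph_adj.2 <| (openGraph_adj.1 h).imp fun _ ↦
    Or.imp (And.imp_right fun h ↦ openEdges_eq_true_iff.2 (.inr h))
      (And.imp_right fun h ↦ openEdges_eq_true_iff.2 (.inr h))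

lemma outside_openGraph_openEdges (L : ℕ) (ω : Config d) :
    outside (openGraph (openEdges (boxEdges L) ω)) (box L 0) =
      outside (openGraph ω) (box L 0) := by
  refine le_antisymm (fun x y h ↦ ⟨?_, h.2⟩) fun x y h ↦ ⟨openGraph_le_openEdges _ ω h.1, h.2⟩
  obtain ⟨i, hi⟩ := openGraph_adj.1 h.1
  refine openGraph_adj.2 ⟨i, hi.imp ?_ ?_⟩
  · rintro ⟨rfl, hb⟩
    exact ⟨rfl, (openEdges_eq_true_iff.1 hb).resolve_left fun hb ↦ h.2 (mem_boxEdges.1 hb)⟩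
  · rintro ⟨rfl, hb⟩
    exact ⟨rfl, (openEdges_eq_true_iff.1 hb).resolve_left fun hb ↦ h.2 (mem_boxEdges.1 hb).symm⟩

lemma preconnected_box_openEdges (L : ℕ) (ω : Config d) :
    ((openGraph (openEdges (boxEdges L) ω)).induce (box L 0)).Preconnected :=
  preconnected_induce_Icc fun _ i hx hxi ↦
    openGraph_adj.2 ⟨i, .inl ⟨rfl, openEdges_eq_true_iff.2 (.inl (mem_boxEdges.2 ⟨hx, hxi⟩))⟩⟩

namespace IsErgodicInsertionTolerant

lemma ae_reachable_or_of_infinite (hP : IsErgodicInsertionTolerant P) :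
    ∀ᵐ ω ∂P, ∀ x y z, (cluster (openGraph ω) x).Infinite → (cluster (openGraph ω) y).Infinite →
      (cluster (openGraph ω) z).Infinite → (openGraph ω).Reachable x y ∨
        (openGraph ω).Reachable x z ∨ (openGraph ω).Reachable y z := by
  have htrif : ∀ᵐ ω ∂P, ∀ L, ¬ IsTrifurcation (openGraph (openEdges (boxEdges L) ω)) (box L 0) :=
    ae_all_iff.2 fun L ↦
      (hP.quasiMeasurePreserving_openEdges (boxEdges L)).ae (hP.ae_not_isTrifurcation L)
  filter_upwards [htrif] with ω hω x y z hx hy hz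
  by_contra! hsep
  obtain ⟨L, hL⟩ := exists_subset_box (Set.toFinite {x, y, z})
  simp only [Set.insert_subset_iff, Set.singleton_subset_iff] at hL
  refine hω L (.of_outside_eq (x := ![x, y, z]) (finite_box L 0) (preconnected_box_openEdges L ω)
    (outside_openGraph_openEdges L ω) ?_ ?_ ?_)
  · simp [Fin.forall_fin_succ, hL]
  · simp [Fin.forall_fin_succ, hx, hy, hz]
  · have hsymm (u v : V d) (h : ¬ (openGraph ω).Reachable u v) : ¬ (openGraph ω).Reachable v u :=
      fun h' ↦ h h'.symm
    intro i j hij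
    fin_cases i <;> fin_cases j <;> simp_all

theorem ae_reachable_of_infinite (hP : IsErgodicInsertionTolerant P) :
    ∀ᵐ ω ∂P, ∀ x y, (cluster (openGraph ω) x).Infinite → (cluster (openGraph ω) y).Infinite →
      (openGraph ω).Reachable x y := by
  have := hP.isProbabilityMeasure
  let unique (ω : Config d) : Prop := ∀ x y, (cluster (openGraph ω) x).Infinite →
    (cluster (openGraph ω) y).Infinite → (openGraph ω).Reachable x y
  have hmeas : MeasurableSet {ω | unique ω} :=
    measurableSet_setOfPred.2 <| .forall fun x ↦ .forall fun y ↦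
      (measurable_infinite_cluster measurable_openGraph_adj x).imp <|
        (measurable_infinite_cluster measurable_openGraph_adj y).imp
          (measurable_reachable measurable_openGraph_adj x y)
  have hinv (z : V d) : shift z ⁻¹' {ω | unique ω} = {ω | unique ω} := by
    ext ω
    simp only [unique, Set.mem_preimage, Set.mem_ofPred_eq, infinite_cluster_openGraph_shift,
      reachable_openGraph_shift]
    refine ⟨fun h x y ↦ ?_, fun h x y ↦ h _ _⟩
    simpa only [sub_add_cancel] using h (x - z) (y - z)
  rcases hP.measure_eq_zero_or_one _ hmeas hinv with h0 | h1
  swap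
  · exact (prob_compl_eq_zero_iff hmeas).2 h1
  have hopen : ∀ᵐ ω ∂P, ∀ L, ¬ unique (openEdges (boxEdges L) ω) := ae_all_iff.2 fun L ↦
    (hP.quasiMeasurePreserving_openEdges (boxEdges L)).ae (measure_eq_zero_iff_ae_notMem.1 h0)
  filter_upwards [hP.ae_reachable_or_of_infinite, hopen] with ω hthree hω x y hx hy
  by_contra hxy
  obtain ⟨L, hL⟩ := exists_subset_box (Set.toFinite {x, y})
  simp only [Set.insert_subset_iff, Set.singleton_subset_iff] at hL
  have hmerge (u : V d) := reachable_of_infinite_of_merge (u := u) (openGraph_le_openEdges _ ω)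
    (outside_openGraph_openEdges L ω) (preconnected_box_openEdges L ω) hthree hL.1 hL.2 hx hy hxy
  exact hω L fun u v hu hv ↦ (hmerge u hu).trans (hmerge v hv).symm

end IsErgodicInsertionTolerant

end Uniqueness

/-! ### Ergodicity of the environment on the infinite cluster -/

section ClusterErgodic

variable {d : ℕ} {ω : Config d} {e : V d} {P : Measure (Config d)}

lemma ae_cond_iff {α : Type*} [MeasurableSpace α] {μ : Measure α} [IsFiniteMeasure μ] {s : Set α}
    (hs : MeasurableSet s) {p : α → Prop} :
    (∀ᵐ x ∂μ[|s], p x) ↔ ∀ᵐ x ∂μ, x ∈ s → p x := by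
  rw [ProbabilityTheory.cond, Measure.ae_ennreal_smul_measure_iff
    (ENNReal.inv_ne_zero.2 (measure_ne_top _ _)), ae_restrict_iff' hs]

lemma neg_mem_Ud (he : e ∈ Ud d) : -e ∈ Ud d := by
  obtain ⟨i, rfl | rfl⟩ := mem_Ud.1 he
  exacts [mem_Ud.2 ⟨i, .inr rfl⟩, mem_Ud.2 ⟨i, .inl (neg_neg _)⟩]

lemma adj_of_edgeOpen (he : edgeOpen ω 0 e) : (openGraph ω).Adj 0 e := by
  change edgeOpen ω 0 (e - 0)
  rwa [sub_zero]

lemma edgeOpen_shift_neg (he : edgeOpen ω 0 e) : edgeOpen (shift e ω) 0 (-e) := by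
  have h : edgeOpen ω e (0 - e) := (adj_of_edgeOpen he).symm
  rwa [edgeOpen_shift, zero_add, ← zero_sub]

lemma shift_mem_cluZero_of_edgeOpen (hω : ω ∈ cluZero d) (he : edgeOpen ω 0 e) :
    shift e ω ∈ cluZero d := by
  rw [shift_mem_cluZero_iff]
  exact (mem_cluZero.1 hω).mono fun _ hy ↦ (adj_of_edgeOpen he).symm.reachable.trans hy

namespace IsErgodicInsertionTolerant

lemma ae_forall_shift (hP : IsErgodicInsertionTolerant P) {p : Config d → Prop}
    (h : ∀ᵐ ω ∂P[|cluZero d], p ω) :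
    ∀ᵐ ω ∂P, ∀ x, shift x ω ∈ cluZero d → p (shift x ω) := by
  have := hP.isProbabilityMeasure
  rw [ae_cond_iff measurableSet_cluZero] at h
  exact ae_all_iff.2 fun x ↦ (hP.measurePreserving_shift x).quasiMeasurePreserving.ae h

theorem ae_notMem_or_ae_mem (hP : IsErgodicInsertionTolerant P) {A : Set (Config d)}
    (hA : MeasurableSet A)
    (hstep : ∀ᵐ ω ∂P[|cluZero d], ∀ e, edgeOpen ω 0 e → ω ∈ A → shift e ω ∈ A) :
    (∀ᵐ ω ∂P[|cluZero d], ω ∉ A) ∨ ∀ᵐ ω ∂P[|cluZero d], ω ∈ A := by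
  have := hP.isProbabilityMeasure
  let visits : Set (Config d) := ⋃ x, shift x ⁻¹' (cluZero d ∩ A)
  have hmeas : MeasurableSet visits :=
    .iUnion fun x ↦ measurable_shift x (measurableSet_cluZero.inter hA)
  have hinv (z : V d) : shift z ⁻¹' visits = visits := by
    ext ω
    simp only [visits, Set.mem_preimage, Set.mem_iUnion, shift_shift]
    exact (Equiv.addRight z).exists_congr_left.trans (by simp)
  simp only [ae_cond_iff measurableSet_cluZero]
  refine (hP.measure_eq_zero_or_one _ hmeas hinv).imp (fun h0 ↦ ?_) fun h1 ↦ ?_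
  · filter_upwards [measure_eq_zero_iff_ae_notMem.1 h0] with ω hω hclu hωA
    exact hω (Set.mem_iUnion.2 ⟨0, by simpa [shift_zero] using ⟨hclu, hωA⟩⟩)
  · filter_upwards [(prob_compl_eq_zero_iff hmeas).2 h1, hP.ae_forall_shift hstep,
      hP.ae_reachable_of_infinite] with ω hω hmove hunique hclu
    obtain ⟨x, hx, hxA⟩ := Set.mem_iUnion.1 hω
    have hpropagate (z : V d) (hz : (openGraph ω).Reachable x z) :
        shift z ω ∈ cluZero d ∩ A := by
      rw [SimpleGraph.reachable_iff_reflTransGen] at hz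
      induction hz with
      | refl => exact ⟨hx, hxA⟩
      | @tail y z _ hyz ih =>
        have hopen : edgeOpen (shift y ω) 0 (z - y) := by
          rw [edgeOpen_shift, zero_add]
          exact hyz
        rw [← sub_add_cancel z y, ← shift_shift]
        exact ⟨shift_mem_cluZero_of_edgeOpen ih.1 hopen, hmove y ih.1 _ hopen ih.2⟩
    simpa only [shift_zero] using
      (hpropagate 0 (hunique x 0 (shift_mem_cluZero_iff.1 hx) (mem_cluZero.1 hclu))).2

end IsErgodicInsertionTolerant

end ClusterErgodic

/-! ### The walk driven by independent noise -/

section Walk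

lemma exists_measurable_map_unitInterval {Ω α : Type*} [MeasurableSpace Ω] [Fintype α] [Nonempty α]
    [MeasurableSpace α] [DiscreteMeasurableSpace α] {κ : Ω → α → ℝ}
    (hκ : ∀ a, Measurable (κ · a)) (hκ0 : ∀ ω a, 0 ≤ κ ω a) :
    ∃ F : Ω → unitInterval → α, Measurable (Function.uncurry F) ∧
      ∀ ω, ∑ a, κ ω a = 1 → ∀ a, volume (F ω ⁻¹' {a}) = ENNReal.ofReal (κ ω a) := by
  classical
  let K : Kernel Ω α :=
    { toFun ω := ∑ a, ENNReal.ofReal (κ ω a) • Measure.dirac a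
      measurable' := by
        refine Measure.measurable_of_measurable_coe _ fun s _ ↦ ?_
        simp only [Measure.coe_finsetSum, Finset.sum_apply, Measure.smul_apply, smul_eq_mul]
        exact Finset.measurable_sum _ fun a _ ↦ (hκ a).ennreal_ofReal.mul_const _ }
  have hK (ω : Ω) (s : Set α) : K ω s = ∑ a, ENNReal.ofReal (κ ω a) * s.indicator 1 a := by
    change (∑ a, ENNReal.ofReal (κ ω a) • Measure.dirac a : Measure α) s = _
    simp [Measure.coe_finsetSum]
  have hstoch : MeasurableSet {ω | ∑ a, κ ω a = 1} :=
    (Finset.measurable_sum _ fun a _ ↦ hκ a) (measurableSet_singleton 1)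
  let K' := Kernel.piecewise hstoch K (Kernel.const Ω (Measure.dirac (Classical.arbitrary α)))
  have : IsMarkovKernel K' := ⟨fun ω ↦ by
    by_cases hω : ω ∈ {ω | ∑ a, κ ω a = 1}
    · refine ⟨?_⟩
      rw [Kernel.piecewise_apply, if_pos hω, hK]
      simp [← ENNReal.ofReal_sum_of_nonneg fun a _ ↦ hκ0 ω a, show ∑ a, κ ω a = 1 from hω]
    · rw [Kernel.piecewise_apply, if_neg hω]
      infer_instance⟩
  obtain ⟨F, hF, hmap⟩ := Kernel.exists_measurable_map_eq_unitInterval K'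
  refine ⟨F, hF, fun ω (hω : ω ∈ {ω | ∑ a, κ ω a = 1}) a ↦ ?_⟩
  have hFω : Measurable (F ω) := hF.comp measurable_prodMk_left
  rw [← Measure.map_apply hFω (measurableSet_singleton a), hmap, Kernel.piecewise_apply,
    if_pos hω, hK]
  simp [Set.indicator_apply]

variable {d : ℕ} {U : Type*} {F : Config d → U → Step d} {N : ℕ} {ω : Config d}

/-- The environment seen from the walker after the step `F ω u` chosen by the noise `u`. -/
def envMap (F : Config d → U → Step d) (ω : Config d) (u : U) : Config d := shift (F ω u).1 ω

/-- The first step of the walk in an environment driven by a noise sequence. -/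
def firstStep (F : Config d → U → Step d) (q : Config d × (ℕ → U)) : Step d := F q.1 (q.2 0)

/-- The first `N` steps of the walk in an environment driven by a noise sequence. -/
def walkSteps (F : Config d → U → Step d) (N : ℕ) (q : Config d × (ℕ → U)) (k : Fin N) : Step d :=
  firstStep F ((skewProduct (envMap F))^[k] q)

lemma walkSteps_succ (q : Config d × (ℕ → U)) : walkSteps F (N + 1) q =
    Fin.cons (firstStep F q) (walkSteps F N (skewProduct (envMap F) q)) := by
  funext k
  refine Fin.cases rfl (fun j ↦ ?_) k
  simp [walkSteps, Function.iterate_succ_apply]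

lemma pos_zero (s : Fin N → Step d) : pos s 0 = 0 := by simp [pos]

lemma pos_cons_succ (e : Step d) (s : Fin N → Step d) (k : ℕ) :
    pos (Fin.cons e s : Fin (N + 1) → Step d) (k + 1) = e.1 + pos s k := by
  simp [pos, Finset.sum_filter, Fin.sum_univ_succ]

lemma pathProb_cons (κ : Config d → Step d → ℝ) (ω : Config d) (e : Step d) (s : Fin N → Step d) :
    pathProb κ ω (Fin.cons e s : Fin (N + 1) → Step d) = κ ω e * pathProb κ (shift e.1 ω) s := by
  simp [pathProb, Fin.prod_univ_succ, pos_zero, shift_zero, pos_cons_succ, shift_shift, add_comm]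

lemma envPair_walkSteps (q : Config d × (ℕ → U)) (k : Fin N) :
    envPair q.1 (walkSteps F N q) k =
      (((skewProduct (envMap F))^[k] q).1, firstStep F ((skewProduct (envMap F))^[k] q)) := by
  refine Prod.ext ?_ rfl
  induction N generalizing q with
  | zero => exact k.elim0
  | succ N ih =>
    cases k using Fin.cases with
    | zero => simp [envPair, pos_zero, shift_zero]
    | succ k =>
      rw [Fin.val_succ, Function.iterate_succ_apply, ← ih, walkSteps_succ]
      simp only [envPair, Fin.val_succ, pos_cons_succ]
      rw [add_comm, ← shift_shift]
      rfl

lemma partialSumF_walkSteps (f : EnvSp d → ℝ) (q : Config d × (ℕ → U)) {m : ℕ} (hm : m ≤ N) :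
    partialSumF f q.1 (walkSteps F N q) m =
      birkhoffSum (skewProduct (envMap F)) (fun q ↦ f (q.1, firstStep F q)) m q := by
  simp only [partialSumF, birkhoffSum, envPair_walkSteps]
  refine Finset.sum_bij (fun k _ ↦ (k : ℕ)) (by simp) (fun _ _ _ _ ↦ Fin.ext) (fun k hk ↦ ?_)
    fun _ _ ↦ rfl
  have hkm := Finset.mem_range.1 hk
  exact ⟨⟨k, hkm.trans_le hm⟩, by simpa using hkm, rfl⟩

variable [MeasurableSpace U]

lemma measurable_shift_step : Measurable fun q : EnvSp d ↦ shift q.2.1 q.1 :=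
  measurable_from_prod_countable_left fun e ↦ measurable_shift e.1

lemma measurable_envMap (hF : Measurable (Function.uncurry F)) :
    Measurable (Function.uncurry (envMap F)) :=
  measurable_shift_step.comp (measurable_fst.prodMk hF)

lemma measurable_firstStep (hF : Measurable (Function.uncurry F)) : Measurable (firstStep F) :=
  hF.comp (measurable_fst.prodMk ((measurable_pi_apply 0).comp measurable_snd))

lemma measurable_walkSteps (hF : Measurable (Function.uncurry F)) (N : ℕ) :
    Measurable (walkSteps F N) :=
  measurable_pi_iff.2 fun k ↦
    (measurable_firstStep hF).comp ((measurable_skewProduct (measurable_envMap hF)).iterate k)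

variable {ν : Measure U} [IsProbabilityMeasure ν] {κ : Config d → Step d → ℝ} {C : Set (Config d)}

lemma iidLaw_walkSteps_eq (hF : Measurable (Function.uncurry F)) (hκ : ∀ ω e, 0 ≤ κ ω e)
    (hFκ : ∀ ω ∈ C, ∀ e, ν (F ω ⁻¹' {e}) = ENNReal.ofReal (κ ω e))
    (hC : ∀ ω ∈ C, ∀ e, κ ω e ≠ 0 → shift e.1 ω ∈ C) (hω : ω ∈ C) (s : Fin N → Step d) :
    iidLaw ν {u | walkSteps F N (ω, u) = s} = ENNReal.ofReal (pathProb κ ω s) := by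
  induction N generalizing ω with
  | zero =>
    rw [show {u | walkSteps F 0 (ω, u) = s} = Set.univ from
      Set.eq_univ_of_forall fun _ ↦ Subsingleton.elim _ _]
    simp [pathProb]
  | succ N ih =>
    have hmeas : MeasurableSet {u | walkSteps F (N + 1) (ω, u) = s} :=
      (measurable_walkSteps hF _).comp measurable_prodMk_left (measurableSet_singleton s)
    cases s using Fin.consCases with
    | _ e s =>
    have hsection (v : U) : consSeq v ⁻¹' {u | walkSteps F (N + 1) (ω, u) = Fin.cons e s} =
        {u | F ω v = e ∧ walkSteps F N (envMap F ω v, u) = s} := by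
      ext u
      simp only [Set.mem_preimage, Set.mem_ofPred_eq, walkSteps_succ, skewProduct_consSeq,
        Fin.cons_inj]
      rfl
    have hfiber (v : U) : iidLaw ν {u | F ω v = e ∧ walkSteps F N (envMap F ω v, u) = s} =
        (F ω ⁻¹' {e}).indicator
          (fun _ ↦ iidLaw ν {u | walkSteps F N (shift e.1 ω, u) = s}) v := by
      by_cases hv : F ω v = e <;> simp [hv, envMap]
    rw [iidLaw_apply_eq_lintegral hmeas]
    simp only [hsection, hfiber]
    have hFω : Measurable (F ω) := hF.comp measurable_prodMk_left
    rw [lintegral_indicator_const (hFω (measurableSet_singleton e)),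
      hFκ ω hω, pathProb_cons, ENNReal.ofReal_mul (hκ _ _), mul_comm]
    by_cases hzero : κ ω e = 0
    · simp [hzero]
    · rw [ih (hC ω hω e hzero)]

lemma qPE_eq_iidLaw (hF : Measurable (Function.uncurry F)) (hκ : ∀ ω e, 0 ≤ κ ω e)
    (hFκ : ∀ ω ∈ C, ∀ e, ν (F ω ⁻¹' {e}) = ENNReal.ofReal (κ ω e))
    (hC : ∀ ω ∈ C, ∀ e, κ ω e ≠ 0 → shift e.1 ω ∈ C) (hω : ω ∈ C) (A : Set (Fin N → Step d)) :
    qPE κ ω A = iidLaw ν {u | walkSteps F N (ω, u) ∈ A} := by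
  classical
  have hmeas : Measurable fun u ↦ walkSteps F N (ω, u) :=
    (measurable_walkSteps hF N).comp measurable_prodMk_left
  have hnonneg (s : Fin N → Step d) : 0 ≤ pathProb κ ω s := Finset.prod_nonneg fun _ _ ↦ hκ _ _
  rw [qPE, qP, ENNReal.ofReal_sum_of_nonneg fun s _ ↦ Set.indicator_nonneg (fun s _ ↦ hnonneg s) s]
  calc ∑ s, ENNReal.ofReal (A.indicator (fun s ↦ pathProb κ ω s) s)
      = ∑ s with s ∈ A, iidLaw ν ((fun u ↦ walkSteps F N (ω, u)) ⁻¹' {s}) := by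
        rw [Finset.sum_filter]
        refine Finset.sum_congr rfl fun s _ ↦ ?_
        by_cases hs : s ∈ A
        · rw [Set.indicator_of_mem hs, if_pos hs]
          exact (iidLaw_walkSteps_eq hF hκ hFκ hC hω s).symm
        · simp [hs]
    _ = iidLaw ν {u | walkSteps F N (ω, u) ∈ A} := by
        rw [sum_measure_preimage_singleton _ fun s _ ↦ hmeas (measurableSet_singleton s)]
        simp [Set.preimage]

end Walk

/-! ### Stationarity and ergodicity of the environment seen from the walker -/

section Stationarity

variable {d : ℕ} {ω : Config d} {P P₀ : Measure (Config d)} {κ : Config d → Step d → ℝ}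
  {φ : Config d → ℝ}

lemma trans_eq_zero_iff {e : V d} : trans ω 0 e = 0 ↔ ¬ edgeOpen ω 0 e := by
  classical
  refine ⟨fun h he ↦ ?_, fun he ↦ if_neg he⟩
  have hdeg : openDeg ω 0 ≠ 0 :=
    Finset.card_ne_zero_of_mem (Finset.mem_filter.2 ⟨mem_Ud_of_edgeOpen he, he⟩)
  rw [trans, if_pos he] at h
  exact one_div_ne_zero (Nat.cast_ne_zero.2 hdeg) h

/-- The weights `κ ω` are a probability on the steps, supported exactly by the open edges at `0`:
the almost sure requirements in the definition of `PiT`, at a given environment. -/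
def IsWalkKernelAt (κ : Config d → Step d → ℝ) (ω : Config d) : Prop :=
  ∑ e, κ ω e = 1 ∧ ∀ e, κ ω e = 0 ↔ ¬ edgeOpen ω 0 e.1

/-- The environments with `0` in the infinite cluster such that `κ` satisfies the requirements of
`PiT` as seen from every vertex of infinite clusters. -/
def regularSet (κ : Config d → Step d → ℝ) : Set (Config d) :=
  {ω | ω ∈ cluZero d ∧ ∀ x, shift x ω ∈ cluZero d → IsWalkKernelAt κ (shift x ω)}

lemma isWalkKernelAt_of_mem_regularSet (hω : ω ∈ regularSet κ) : IsWalkKernelAt κ ω := by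
  simpa only [shift_zero] using hω.2 0 (by simpa only [shift_zero] using hω.1)

lemma shift_mem_regularSet (hω : ω ∈ regularSet κ) (e : Step d) (he : κ ω e ≠ 0) :
    shift e.1 ω ∈ regularSet κ := by
  have hopen : edgeOpen ω 0 e.1 :=
    not_not.1 (((isWalkKernelAt_of_mem_regularSet hω).2 e).not.1 he)
  refine ⟨shift_mem_cluZero_of_edgeOpen hω.1 hopen, fun x ↦ ?_⟩
  rw [shift_shift]
  exact hω.2 _

lemma ae_isWalkKernelAt (hκ : κ ∈ PiT d P₀) : ∀ᵐ ω ∂P₀, IsWalkKernelAt κ ω := by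
  filter_upwards [hκ.2.2.2.1, ae_all_iff.2 hκ.2.2.2.2] with ω hsum hzero
  exact ⟨hsum, fun e ↦ (hzero e).trans trans_eq_zero_iff⟩

lemma lintegral_pairMeasure (hκ : ∀ e, Measurable (κ · e)) (hφ : Measurable φ)
    {g : EnvSp d → ℝ≥0∞} (hg : Measurable g) :
    ∫⁻ q, g q ∂pairMeasure P₀ κ φ =
      ∫⁻ ω, ∑ e, ENNReal.ofReal (κ ω e * φ ω) * g (ω, e) ∂P₀ := by
  have hflow (e : Step d) : Measurable fun ω ↦ ENNReal.ofReal (κ ω e * φ ω) :=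
    ((hκ e).mul hφ).ennreal_ofReal
  have hslice (e : Step d) : Measurable fun ω ↦ g (ω, e) := hg.comp measurable_prodMk_right
  rw [lintegral_finsetSum _ fun e _ ↦ by exact (hflow e).mul (hslice e), pairMeasure,
    lintegral_sum_measure, tsum_fintype]
  refine Finset.sum_congr rfl fun e _ ↦ ?_
  rw [lintegral_map hg measurable_prodMk_right,
    lintegral_withDensity_eq_lintegral_mul _ (hflow e) (hslice e)]
  rfl

lemma integral_pairMeasure (hκ : ∀ e, Measurable (κ · e)) (hκ0 : ∀ ω e, 0 ≤ κ ω e)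
    (hφ : Measurable φ) (hφ0 : ∀ ω, 0 ≤ φ ω) {f : EnvSp d → ℝ}
    (hf : Integrable f (pairMeasure P₀ κ φ)) :
    ∫ q, f q ∂pairMeasure P₀ κ φ = ∫ ω, φ ω * ∑ e, f (ω, e) * κ ω e ∂P₀ := by
  have hflow (e : Step d) : Measurable fun ω ↦ ENNReal.ofReal (κ ω e * φ ω) :=
    ((hκ e).mul hφ).ennreal_ofReal
  have hdensity (e : Step d) (ω : Config d) :
      (ENNReal.ofReal (κ ω e * φ ω)).toReal • f (ω, e) = φ ω * (f (ω, e) * κ ω e) := by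
    rw [ENNReal.toReal_ofReal (mul_nonneg (hκ0 _ _) (hφ0 _)), smul_eq_mul]
    ring
  rw [pairMeasure, Measure.sum_fintype] at hf ⊢
  have hslice (e : Step d) := integrable_finsetSum_measure.1 hf e (Finset.mem_univ e)
  have hterm (e : Step d) : Integrable (fun ω ↦ φ ω * (f (ω, e) * κ ω e)) P₀ := by
    have h := (measurableEmbedding_prod_mk_right e).integrable_map_iff.1 (hslice e)
    rw [integrable_withDensity_iff_integrable_smul' (hflow e)
      (.of_forall fun _ ↦ ENNReal.ofReal_lt_top)] at h
    simpa only [Function.comp_apply, hdensity] using h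
  simp only [Finset.mul_sum]
  rw [integral_finsetSum_measure fun e _ ↦ hslice e, integral_finsetSum _ fun e _ ↦ hterm e]
  refine Finset.sum_congr rfl fun e _ ↦ ?_
  rw [(measurableEmbedding_prod_mk_right e).integral_map,
    integral_withDensity_eq_integral_toReal_smul (hflow e)
      (.of_forall fun _ ↦ ENNReal.ofReal_lt_top)]
  simp only [hdensity]

/-- The law on environments with density `φ` with respect to `P₀`. -/
def densityLaw (P₀ : Measure (Config d)) (φ : Config d → ℝ) : Measure (Config d) :=
  P₀.withDensity fun ω ↦ ENNReal.ofReal (φ ω)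

lemma isProbabilityMeasure_densityLaw (hφ : IsInvDensity P₀ κ φ) :
    IsProbabilityMeasure (densityLaw P₀ φ) := by
  have hint : Integrable φ P₀ := .of_integral_ne_zero (by rw [hφ.2.2.1]; exact one_ne_zero)
  refine ⟨?_⟩
  rw [densityLaw, withDensity_apply _ .univ, Measure.restrict_univ,
    ← ofReal_integral_eq_lintegral_ofReal hint (.of_forall hφ.2.1), hφ.2.2.1, ENNReal.ofReal_one]

lemma isProbabilityMeasure_pairMeasure (hκ : κ ∈ PiT d P₀) (hφ : IsInvDensity P₀ κ φ) :
    IsProbabilityMeasure (pairMeasure P₀ κ φ) := by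
  have := isProbabilityMeasure_densityLaw hφ
  obtain ⟨hκm, hκ0, -, hsum, -⟩ := hκ
  refine ⟨Eq.trans ?_ (measure_univ (μ := densityLaw P₀ φ))⟩
  rw [← lintegral_one, lintegral_pairMeasure hκm hφ.1 measurable_const, densityLaw,
    withDensity_apply _ .univ, Measure.restrict_univ]
  refine lintegral_congr_ae (hsum.mono fun ω hω ↦ ?_)
  simp only [mul_one, ENNReal.ofReal_mul (hκ0 ω _), ← Finset.sum_mul,
    ← ENNReal.ofReal_sum_of_nonneg fun e _ ↦ hκ0 ω e, hω, ENNReal.ofReal_one, one_mul]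

section Noise

variable {U : Type*} [MeasurableSpace U] {ν : Measure U} [SFinite ν] {F : Config d → U → Step d}

lemma measurePreserving_step (hκ : ∀ e, Measurable (κ · e)) (hκ0 : ∀ ω e, 0 ≤ κ ω e)
    (hφ : Measurable φ) (hF : Measurable (Function.uncurry F))
    (hFκ : ∀ᵐ ω ∂P₀, ∀ e, ν (F ω ⁻¹' {e}) = ENNReal.ofReal (κ ω e)) :
    MeasurePreserving (fun q ↦ (q.1, F q.1 q.2)) ((densityLaw P₀ φ).prod ν)
      (pairMeasure P₀ κ φ) := by
  have hpair : Measurable fun q : Config d × U ↦ (q.1, F q.1 q.2) := measurable_fst.prodMk hF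
  refine ⟨hpair, Measure.ext_of_lintegral _ fun g hg ↦ ?_⟩
  have hgF : Measurable fun q : Config d × U ↦ g (q.1, F q.1 q.2) := hg.comp hpair
  rw [lintegral_map hg hpair, lintegral_prod _ hgF.aemeasurable, densityLaw,
    lintegral_withDensity_eq_lintegral_mul _ hφ.ennreal_ofReal hgF.lintegral_prod_right',
    lintegral_pairMeasure hκ hφ hg]
  refine lintegral_congr_ae (hFκ.mono fun ω hω ↦ ?_)
  have hFω : Measurable (F ω) := hF.comp measurable_prodMk_left
  have hnoise : ∫⁻ u, g (ω, F ω u) ∂ν = ∑ e, g (ω, e) * ENNReal.ofReal (κ ω e) := by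
    rw [← lintegral_map (f := fun e ↦ g (ω, e)) .of_discrete hFω, lintegral_fintype]
    exact Finset.sum_congr rfl fun e _ ↦ by
      rw [Measure.map_apply hFω (measurableSet_singleton e), hω]
  simp only [Pi.mul_apply, hnoise, Finset.mul_sum]
  refine Finset.sum_congr rfl fun e _ ↦ ?_
  rw [ENNReal.ofReal_mul (hκ0 ω e)]
  ring

end Noise

lemma map_withDensity_comp {α β : Type*} [MeasurableSpace α] [MeasurableSpace β] {μ : Measure α}
    {ν : Measure β} {f : α → β} (hf : MeasurePreserving f μ ν) {g : β → ℝ≥0∞} (hg : Measurable g) :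
    (μ.withDensity fun x ↦ g (f x)).map f = ν.withDensity g := by
  ext s hs
  rw [Measure.map_apply hf.measurable hs, withDensity_apply _ (hf.measurable hs),
    withDensity_apply _ hs, hf.setLIntegral_comp_preimage hs hg]

lemma withDensity_cond {α : Type*} [MeasurableSpace α] {μ : Measure α} {s : Set α}
    (hs : MeasurableSet s) (g : α → ℝ≥0∞) :
    μ[|s].withDensity g = (μ s)⁻¹ • μ.withDensity (s.indicator g) := by
  rw [ProbabilityTheory.cond, withDensity_smul_measure, withDensity_indicator hs]

namespace IsErgodicInsertionTolerant

lemma ae_mem_regularSet (hP : IsErgodicInsertionTolerant P) (hκ : κ ∈ PiT d (P[|cluZero d])) :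
    ∀ᵐ ω ∂P[|cluZero d], ω ∈ regularSet κ := by
  have := hP.isProbabilityMeasure
  rw [ae_cond_iff measurableSet_cluZero]
  filter_upwards [hP.ae_forall_shift (ae_isWalkKernelAt hκ)] with ω hω hclu
  exact ⟨hclu, hω⟩

theorem ae_pos_of_mem_Epairs (hP : IsErgodicInsertionTolerant P)
    (hpair : (κ, φ) ∈ Epairs d (P[|cluZero d])) : ∀ᵐ ω ∂P[|cluZero d], 0 < φ ω := by
  obtain ⟨hκ, hφ, hφ0, hint, hbalance⟩ := hpair
  have hstep : ∀ᵐ ω ∂P[|cluZero d], ∀ e, edgeOpen ω 0 e → ω ∈ {ω | φ ω = 0} →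
      shift e ω ∈ {ω | φ ω = 0} := by
    filter_upwards [hbalance, hP.ae_mem_regularSet hκ] with ω hbal hreg e he hzero
    have hback : κ (shift e ω) ⟨-e, neg_mem_Ud (mem_Ud_of_edgeOpen he)⟩ ≠ 0 := fun h ↦
      ((hreg.2 e (shift_mem_cluZero_of_edgeOpen hreg.1 he)).2 _).1 h (edgeOpen_shift_neg he)
    rw [show φ ω = 0 from hzero, eq_comm,
      Finset.sum_eq_zero_iff_of_nonneg fun e _ ↦ mul_nonneg (hκ.2.1 _ e) (hφ0 _)] at hbal
    have hterm := hbal ⟨-e, neg_mem_Ud (mem_Ud_of_edgeOpen he)⟩ (Finset.mem_univ _)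
    simp only [neg_neg] at hterm
    exact (mul_eq_zero.1 hterm).resolve_left hback
  obtain h | h := hP.ae_notMem_or_ae_mem (hφ (measurableSet_singleton 0)) hstep
  · exact h.mono fun ω hω ↦ (hφ0 ω).lt_of_ne' hω
  · exact absurd (hint.symm.trans (integral_eq_zero_of_ae h)) one_ne_zero

lemma ae_sum_indicator_flow_le (hP : IsErgodicInsertionTolerant P)
    (hpair : (κ, φ) ∈ Epairs d (P[|cluZero d])) :
    ∀ᵐ ω ∂P, ∑ e : Step d, (cluZero d).indicator (fun ω ↦ ENNReal.ofReal (κ ω e * φ ω))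
        (shift (-e.1) ω) ≤ (cluZero d).indicator (fun ω ↦ ENNReal.ofReal (φ ω)) ω := by
  have := hP.isProbabilityMeasure
  obtain ⟨hκ, _, hφ0, _, hbalance⟩ := hpair
  filter_upwards [hP.ae_forall_shift (ae_isWalkKernelAt hκ),
    (ae_cond_iff measurableSet_cluZero).1 hbalance] with ω hreg hbal
  by_cases hω : ω ∈ cluZero d
  · have hnonneg (e : Step d) : 0 ≤ κ (shift (-e.1) ω) e * φ (shift (-e.1) ω) :=
      mul_nonneg (hκ.2.1 _ e) (hφ0 _)
    rw [Set.indicator_of_mem hω, hbal hω, ENNReal.ofReal_sum_of_nonneg fun e _ ↦ hnonneg e]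
    exact Finset.sum_le_sum fun e _ ↦ Set.indicator_le_self _ _ _
  · refine (Finset.sum_eq_zero fun e _ ↦ ?_).trans_le zero_le
    refine Set.indicator_apply_eq_zero.2 fun hclu ↦ ?_
    have hclosed : ¬ edgeOpen (shift (-e.1) ω) 0 e.1 := fun h ↦
      hω (by simpa [shift_shift, shift_zero] using shift_mem_cluZero_of_edgeOpen hclu h)
    rw [((hreg _ hclu).2 e).2 hclosed, zero_mul, ENNReal.ofReal_zero]

lemma map_shift_pairMeasure_le (hP : IsErgodicInsertionTolerant P)
    (hpair : (κ, φ) ∈ Epairs d (P[|cluZero d])) :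
    (pairMeasure (P[|cluZero d]) κ φ).map (fun q ↦ shift q.2.1 q.1) ≤
      densityLaw (P[|cluZero d]) φ := by
  let flow (e : Step d) : Config d → ℝ≥0∞ :=
    (cluZero d).indicator fun ω ↦ ENNReal.ofReal (κ ω e * φ ω)
  have hflow (e : Step d) : Measurable (flow e) :=
    (((hpair.1.1 e).mul hpair.2.1).ennreal_ofReal).indicator measurableSet_cluZero
  have hpull (e : Step d) : Measurable fun ω ↦ flow e (shift (-e.1) ω) :=
    (hflow e).comp (measurable_shift _)
  have hpush (e : Step d) : (P.withDensity (flow e)).map (shift e.1) =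
      P.withDensity fun ω ↦ flow e (shift (-e.1) ω) := by
    rw [← map_withDensity_comp (hP.measurePreserving_shift e.1)
      (hpull e)]
    simp only [shift_shift, neg_add_cancel, shift_zero]
  calc (pairMeasure (P[|cluZero d]) κ φ).map (fun q ↦ shift q.2.1 q.1)
      = ∑ e, (P (cluZero d))⁻¹ • P.withDensity fun ω ↦ flow e (shift (-e.1) ω) := by
        rw [pairMeasure, Measure.map_sum measurable_shift_step.aemeasurable, Measure.sum_fintype]
        refine Finset.sum_congr rfl fun e _ ↦ ?_
        rw [Measure.map_map measurable_shift_step measurable_prodMk_right,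
          withDensity_cond measurableSet_cluZero, Measure.map_smul, ← hpush]
        rfl
    _ = (P (cluZero d))⁻¹ • P.withDensity fun ω ↦ ∑ e : Step d, flow e (shift (-e.1) ω) := by
        rw [← Finset.smul_sum, ← Measure.sum_fintype,
          ← withDensity_tsum fun e ↦ hpull e, tsum_fintype]
        simp only [Finset.sum_fn]
    _ ≤ densityLaw (P[|cluZero d]) φ := by
        rw [densityLaw, withDensity_cond measurableSet_cluZero]
        gcongr
        exact withDensity_mono (hP.ae_sum_indicator_flow_le hpair)

section Noise

variable {U : Type*} [MeasurableSpace U] {ν : Measure U} [IsProbabilityMeasure ν]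
  {F : Config d → U → Step d}

theorem measurePreserving_envMap (hP : IsErgodicInsertionTolerant P)
    (hpair : (κ, φ) ∈ Epairs d (P[|cluZero d])) (hF : Measurable (Function.uncurry F))
    (hFκ : ∀ᵐ ω ∂P[|cluZero d], ∀ e, ν (F ω ⁻¹' {e}) = ENNReal.ofReal (κ ω e)) :
    MeasurePreserving (Function.uncurry (envMap F)) ((densityLaw (P[|cluZero d]) φ).prod ν)
      (densityLaw (P[|cluZero d]) φ) := by
  have := isProbabilityMeasure_densityLaw hpair.2
  have henv := measurable_envMap hF
  have hpush : ((densityLaw (P[|cluZero d]) φ).prod ν).map (Function.uncurry (envMap F)) =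
      (pairMeasure (P[|cluZero d]) κ φ).map (fun q ↦ shift q.2.1 q.1) := by
    have hmp := measurePreserving_step hpair.1.1 hpair.1.2.1 hpair.2.1 hF hFκ
    rw [← hmp.map_eq, Measure.map_map measurable_shift_step hmp.measurable]
    rfl
  have := Measure.isProbabilityMeasure_map henv.aemeasurable
    (μ := (densityLaw (P[|cluZero d]) φ).prod ν)
  exact ⟨henv, Measure.eq_of_le_of_isProbabilityMeasure
    (hpush.trans_le (hP.map_shift_pairMeasure_le hpair))⟩

lemma absolutelyContinuous_densityLaw (hP : IsErgodicInsertionTolerant P)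
    (hpair : (κ, φ) ∈ Epairs d (P[|cluZero d])) :
    P[|cluZero d] ≪ densityLaw (P[|cluZero d]) φ :=
  withDensity_absolutelyContinuous' hpair.2.1.ennreal_ofReal.aemeasurable
    ((hP.ae_pos_of_mem_Epairs hpair).mono fun _ ↦ (ENNReal.ofReal_pos.2 · |>.ne'))

theorem isErgodicRandomMap_envMap (hP : IsErgodicInsertionTolerant P)
    (hpair : (κ, φ) ∈ Epairs d (P[|cluZero d]))
    (hFκ : ∀ᵐ ω ∂P[|cluZero d], ∀ e, ν (F ω ⁻¹' {e}) = ENNReal.ofReal (κ ω e)) :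
    IsErgodicRandomMap (envMap F) (densityLaw (P[|cluZero d]) φ) ν := by
  intro A hA hinv
  have hinv' := (hP.absolutelyContinuous_densityLaw hpair).ae_le (Measure.ae_ae_of_ae_prod hinv)
  have hstep : ∀ᵐ ω ∂P[|cluZero d], ∀ e, edgeOpen ω 0 e → ω ∈ A → shift e ω ∈ A := by
    filter_upwards [hinv', hFκ, ae_isWalkKernelAt hpair.1] with ω hinvω hFω hker e he hωA
    let e' : Step d := ⟨e, mem_Ud_of_edgeOpen he⟩
    have hpos : 0 < κ ω e' := (hpair.1.2.1 ω e').lt_of_ne' fun h ↦ (hker.2 e').1 h he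
    have hfreq : ∃ᵐ u ∂ν, F ω u = e' := by
      rw [frequently_ae_iff]
      exact (hFω e').trans_ne (ENNReal.ofReal_pos.2 hpos).ne'
    obtain ⟨u, hu, hA⟩ := (hfreq.and_eventually hinvω).exists
    simpa [envMap, hu, e'] using hA.1 hωA
  have hle := (withDensity_absolutelyContinuous (P[|cluZero d])
    fun ω ↦ ENNReal.ofReal (φ ω)).ae_le
  exact (hP.ae_notMem_or_ae_mem hA hstep).symm.imp (hle ·) (hle ·)

end Noise

end IsErgodicInsertionTolerant

end Stationarity

/-! ### Quenched convergence -/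

section Quenched

lemma aestronglyMeasurable_birkhoffAverage {α : Type*} [MeasurableSpace α] {μ : Measure α}
    {T : α → α} {g : α → ℝ} (hT : Measure.QuasiMeasurePreserving T μ μ)
    (hg : AEStronglyMeasurable g μ) (n : ℕ) :
    AEStronglyMeasurable (birkhoffAverage ℝ T g n) μ :=
  (Finset.aestronglyMeasurable_fun_sum _ fun k _ ↦
    hg.comp_quasiMeasurePreserving (hT.iterate k)).const_smul ((n : ℝ)⁻¹)

lemma tendsto_measure_exists_ge_lt_abs_sub {α : Type*} [MeasurableSpace α] {μ : Measure α}
    [IsFiniteMeasure μ] {a : ℕ → α → ℝ} {c ε : ℝ} (ha : ∀ m, AEStronglyMeasurable (a m) μ)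
    (hlim : ∀ᵐ x ∂μ, Tendsto (a · x) atTop (𝓝 c)) (hε : 0 < ε) :
    Tendsto (fun n ↦ μ {x | ∃ m ≥ n, ε < |a m x - c|}) atTop (𝓝 0) := by
  have hmeas (n : ℕ) : NullMeasurableSet {x | ∃ m ≥ n, ε < |a m x - c|} μ := by
    simp only [Set.ofPred_exists]
    exact .iUnion fun m ↦ (MeasurableSet.const _).nullMeasurableSet.inter
      (nullMeasurableSet_lt aemeasurable_const ((ha m).aemeasurable.sub_const c).abs)
  have hanti : Antitone fun n ↦ {x | ∃ m ≥ n, ε < |a m x - c|} :=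
    fun _ _ hnk _ ⟨m, hm, hx⟩ ↦ ⟨m, hnk.trans hm, hx⟩
  have hnull : μ (⋂ n, {x | ∃ m ≥ n, ε < |a m x - c|}) = 0 := by
    refine measure_eq_zero_iff_ae_notMem.2 (hlim.mono fun x hx hmem ↦ ?_)
    obtain ⟨n, hn⟩ := Metric.tendsto_atTop.1 hx ε hε
    obtain ⟨m, hm, hlt⟩ := Set.mem_iInter.1 hmem n
    exact hlt.not_gt (hn m hm)
  exact hnull ▸ tendsto_measure_iInter_atTop hmeas hanti ⟨0, measure_ne_top _ _⟩

variable {d : ℕ} {P P₀ : Measure (Config d)} {κ : Config d → Step d → ℝ} {φ : Config d → ℝ}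

lemma nonempty_step_of_mem_Epairs (hpair : (κ, φ) ∈ Epairs d P₀) : Nonempty (Step d) := by
  obtain ⟨-, -, -, hint, hbalance⟩ := hpair
  by_contra hempty
  rw [not_nonempty_iff] at hempty
  simp only [Finset.univ_eq_empty, Finset.sum_empty] at hbalance
  exact zero_ne_one ((integral_eq_zero_of_ae hbalance).symm.trans hint)

variable {U : Type*} [MeasurableSpace U] {ν : Measure U} [IsProbabilityMeasure ν]
  {F : Config d → U → Step d} {f : EnvSp d → ℝ}

lemma measurePreserving_firstStep (hφ : IsInvDensity P₀ κ φ) (hκ : ∀ e, Measurable (κ · e))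
    (hκ0 : ∀ ω e, 0 ≤ κ ω e) (hF : Measurable (Function.uncurry F))
    (hFκ : ∀ᵐ ω ∂P₀, ∀ e, ν (F ω ⁻¹' {e}) = ENNReal.ofReal (κ ω e)) :
    MeasurePreserving (fun q ↦ (q.1, firstStep F q)) ((densityLaw P₀ φ).prod (iidLaw ν))
      (pairMeasure P₀ κ φ) := by
  have := isProbabilityMeasure_densityLaw hφ
  exact (measurePreserving_step hκ hκ0 hφ.1 hF hFκ).comp
    ((MeasurePreserving.id _).prod (measurePreserving_eval_infinitePi (fun _ ↦ ν) 0))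

lemma tendsto_iSup_qPE {C : Set (Config d)} {ω : Config d} {c : ℝ}
    (hF : Measurable (Function.uncurry F)) (hκ : ∀ ω e, 0 ≤ κ ω e)
    (hFκ : ∀ ω ∈ C, ∀ e, ν (F ω ⁻¹' {e}) = ENNReal.ofReal (κ ω e))
    (hC : ∀ ω ∈ C, ∀ e, κ ω e ≠ 0 → shift e.1 ω ∈ C) (hω : ω ∈ C)
    (hmeas : ∀ m, AEStronglyMeasurable (fun u ↦ birkhoffAverage ℝ (skewProduct (envMap F))
      (fun q ↦ f (q.1, firstStep F q)) m (ω, u)) (iidLaw ν))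
    (hlim : ∀ᵐ u ∂iidLaw ν, Tendsto (fun m ↦ birkhoffAverage ℝ (skewProduct (envMap F))
      (fun q ↦ f (q.1, firstStep F q)) m (ω, u)) atTop (𝓝 c)) {ε : ℝ} (hε : 0 < ε) :
    Tendsto (fun n : ℕ ↦ ⨆ N : ℕ, qPE κ ω {s : Fin N → Step d | ∃ m : ℕ, n ≤ m ∧ m ≤ N ∧
      ε < |(m : ℝ)⁻¹ * partialSumF f ω s m - c|}) atTop (𝓝 0) := by
  refine tendsto_of_tendsto_of_tendsto_of_le_of_le tendsto_const_nhds
    (tendsto_measure_exists_ge_lt_abs_sub hmeas hlim hε) (fun _ ↦ zero_le) fun n ↦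
    iSup_le fun N ↦ ?_
  rw [qPE_eq_iidLaw hF hκ hFκ hC hω]
  refine measure_mono fun u ⟨m, hnm, hmN, hlt⟩ ↦ ⟨m, hnm, ?_⟩
  rwa [partialSumF_walkSteps f (ω, u) hmN] at hlt

namespace IsErgodicInsertionTolerant

theorem ergodic_skewProduct_envMap (hP : IsErgodicInsertionTolerant P)
    (hpair : (κ, φ) ∈ Epairs d (P[|cluZero d])) (hF : Measurable (Function.uncurry F))
    (hFκ : ∀ᵐ ω ∂P[|cluZero d], ∀ e, ν (F ω ⁻¹' {e}) = ENNReal.ofReal (κ ω e)) :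
    Ergodic (skewProduct (envMap F)) ((densityLaw (P[|cluZero d]) φ).prod (iidLaw ν)) := by
  have := isProbabilityMeasure_densityLaw hpair.2
  exact ergodic_skewProduct (hP.measurePreserving_envMap hpair hF hFκ)
    (hP.isErgodicRandomMap_envMap hpair hFκ)

theorem ae_tendsto_birkhoffAverage_walk (hP : IsErgodicInsertionTolerant P)
    (hpair : (κ, φ) ∈ Epairs d (P[|cluZero d])) (hF : Measurable (Function.uncurry F))
    (hFκ : ∀ᵐ ω ∂P[|cluZero d], ∀ e, ν (F ω ⁻¹' {e}) = ENNReal.ofReal (κ ω e))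
    (hf : Integrable f (pairMeasure (P[|cluZero d]) κ φ)) :
    ∀ᵐ ω ∂P[|cluZero d], ∀ᵐ u ∂iidLaw ν,
      Tendsto (fun m ↦ birkhoffAverage ℝ (skewProduct (envMap F))
        (fun q ↦ f (q.1, firstStep F q)) m (ω, u)) atTop
        (𝓝 (∫ ω', φ ω' * ∑ e, f (ω', e) * κ ω' e ∂P[|cluZero d])) := by
  have := isProbabilityMeasure_densityLaw hpair.2
  have hmp := measurePreserving_firstStep hpair.2 hpair.1.1 hpair.1.2.1 hF hFκ
  have hconv := ae_tendsto_birkhoffAverage (hP.ergodic_skewProduct_envMap hpair hF hFκ)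
    (hmp.integrable_comp_of_integrable hf)
  rw [← integral_pairMeasure hpair.1.1 hpair.1.2.1 hpair.2.1 hpair.2.2.1 hf, ← hmp.map_eq,
    integral_map hmp.aemeasurable (hmp.map_eq.symm ▸ hf.aestronglyMeasurable)]
  exact (hP.absolutelyContinuous_densityLaw hpair).ae_le (Measure.ae_ae_of_ae_prod hconv)

lemma ae_aestronglyMeasurable_birkhoffAverage_walk (hP : IsErgodicInsertionTolerant P)
    (hpair : (κ, φ) ∈ Epairs d (P[|cluZero d])) (hF : Measurable (Function.uncurry F))
    (hFκ : ∀ᵐ ω ∂P[|cluZero d], ∀ e, ν (F ω ⁻¹' {e}) = ENNReal.ofReal (κ ω e))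
    (hf : AEStronglyMeasurable f (pairMeasure (P[|cluZero d]) κ φ)) :
    ∀ᵐ ω ∂P[|cluZero d], ∀ m, AEStronglyMeasurable (fun u ↦ birkhoffAverage ℝ
      (skewProduct (envMap F)) (fun q ↦ f (q.1, firstStep F q)) m (ω, u)) (iidLaw ν) := by
  have := isProbabilityMeasure_densityLaw hpair.2
  have hmp := measurePreserving_firstStep hpair.2 hpair.1.1 hpair.1.2.1 hF hFκ
  exact ae_all_iff.2 fun m ↦ (hP.absolutelyContinuous_densityLaw hpair).ae_le
    (aestronglyMeasurable_birkhoffAverage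
      (hP.ergodic_skewProduct_envMap hpair hF hFκ).quasiMeasurePreserving
      (hf.comp_measurePreserving hmp) m).prodMk_left

end IsErgodicInsertionTolerant

end Quenched

end SRWPC

open SRWPC in
theorem ergodic_theorem_along_walk_general {d : ℕ} {P : Measure (Config d)}
    (hP : IsErgodicInsertionTolerant P) {κ : Config d → Step d → ℝ} {φ : Config d → ℝ}
    (hpair : (κ, φ) ∈ Epairs d (P[|cluZero d])) {f : EnvSp d → ℝ}
    (hf : Integrable f (pairMeasure (P[|cluZero d]) κ φ)) :
    ∀ᵐ ω ∂P[|cluZero d], ∀ ε : ℝ, 0 < ε →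
      Tendsto (fun n : ℕ ↦ ⨆ N : ℕ, qPE κ ω {s : Fin N → Step d | ∃ m : ℕ, n ≤ m ∧ m ≤ N ∧
        ε < |(m : ℝ)⁻¹ * partialSumF f ω s m -
          ∫ ω', φ ω' * ∑ e, f (ω', e) * κ ω' e ∂P[|cluZero d]|}) atTop (𝓝 0) := by
  have := nonempty_step_of_mem_Epairs hpair
  obtain ⟨F, hF, hFκ⟩ := exists_measurable_map_unitInterval hpair.1.1 hpair.1.2.1
  have hreg := hP.ae_mem_regularSet hpair.1
  have hFreg (ω : Config d) (hω : ω ∈ regularSet κ) :=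
    hFκ ω (isWalkKernelAt_of_mem_regularSet hω).1
  filter_upwards [hreg, hP.ae_tendsto_birkhoffAverage_walk hpair hF (hreg.mono hFreg) hf,
    hP.ae_aestronglyMeasurable_birkhoffAverage_walk hpair hF (hreg.mono hFreg)
      hf.aestronglyMeasurable] with ω hω hlim hmeas ε hε
  exact tendsto_iSup_qPE hF hpair.1.2.1 hFreg (fun _ ↦ shift_mem_regularSet) hω hmeas hlim hε

open SRWPC in
/-- **Ergodic theorem along the walk** (Corollary 3.3): for any `(π̃,φ) ∈ ℰ`,
`P₀`-a.s. in `ω`, the empirical averages of `f` converge `P₀^{π̃,ω}`-a.s. to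
`∫ φ(ω) Σ_e f(ω,e) π̃(ω,e) dP₀`.  (Almost-sure convergence of the trajectory averages is
expressed through the quenched probabilities of the finite-horizon bad events.) -/
theorem ergodic_theorem_along_walk
    (d : ℕ) (hd : 2 ≤ d) (p : ℝ) (hp0 : 0 < p) (hp1 : p < 1) (hpc : pc d < p)
    (P : Measure (Config d)) (hP : IsBernoulli d p P)
    (κ : Config d → Step d → ℝ) (φ : Config d → ℝ) (hpair : (κ, φ) ∈ Epairs d (P[|cluZero d]))
    (f : BoundedContinuousFunction (EnvSp d) ℝ) :
    ∀ᵐ ω ∂(P[|cluZero d]), ∀ ε : ℝ, 0 < ε →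
      Filter.Tendsto (fun n : ℕ => ⨆ N : ℕ, qPE κ ω
          {s : Fin N → Step d | ∃ m : ℕ, n ≤ m ∧ m ≤ N ∧
            ε < |(m : ℝ)⁻¹ * partialSumF (⇑f) ω s m -
              ∫ ω', φ ω' * ∑ e : Step d, f (ω', e) * κ ω' e ∂(P[|cluZero d])|})
        Filter.atTop (nhds 0) := by
  have hperc := hP.isErgodicInsertionTolerant (by lia) hp0 hp1.le
  have := isProbabilityMeasure_pairMeasure hpair.1 hpair.2
  exact ergodic_theorem_along_walk_general hperc hpair (f.integrable _)
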